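/- arXiv:2202.01707 — 7 statements merged into one kernel-verified Lean document; each statement's English description precedes it below -/
import Mathlib

section
/- Let û ∈ L^∞([t0,t1],R^m). Then the projection π(t,v) = t is surjective from clm(û) onto [t0,t1]; that is, for every t ∈ [t0,t1] there exists v ∈ R^m with (t,v) ∈ clm(û). -/
open MeasureTheory Set Filter

/-- The closure of a measurable function `u` with respect to Lebesgue measure. -/
def clmSet (t0 t1 : ℝ) {m : ℕ} (u : ℝ → (Fin m → ℝ)) : Set (ℝ × (Fin m → ℝ)) :=
  {p | ∀ O : Set (ℝ × (Fin m → ℝ)), IsOpen O → p ∈ O →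
    0 < volume (Prod.fst '' (O ∩ ((fun t => (t, u t)) '' Icc t0 t1)))}

/-!
Since `t` lies in the support of the measure, some ultrafilter finer than the filter of conull sets
converges to `t`. Its image under `u` contains a compact set, hence converges to some `v`, and then
`(t, v)` is a cluster point of the map `x ↦ (x, u x)` along the filter of conull sets.
-/

section MapClusterPt

variable {α X Y : Type*} [TopologicalSpace X] [TopologicalSpace Y] {l : Filter α} {f : α → X}
  {g : α → Y} {x : X} {K : Set Y}

theorem exists_mapClusterPt_prodMk_of_isCompact (hf : MapClusterPt x l f) (hK : IsCompact K)
    (hg : ∀ᶠ a in l, g a ∈ K) : ∃ y ∈ K, MapClusterPt (x, y) l fun a => (f a, g a) := by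
  obtain ⟨U, hUl, hUx⟩ := mapClusterPt_iff_ultrafilter.1 hf
  obtain ⟨y, hyK, hUy⟩ := hK.ultrafilter_le_nhds' (U.map g) (hUl hg)
  exact ⟨y, hyK, mapClusterPt_iff_ultrafilter.2 ⟨U, hUl, hUx.prodMk_nhds hUy⟩⟩

end MapClusterPt

section Support

variable {X : Type*} [TopologicalSpace X] [MeasurableSpace X]

theorem clusterPt_ae_iff_mem_support {μ : Measure X} {x : X} :
    ClusterPt x (ae μ) ↔ x ∈ μ.support := by
  simp only [clusterPt_iff_frequently, frequently_ae_mem_iff, Measure.mem_support_iff_forall,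
    pos_iff_ne_zero]

theorem closure_interior_subset_support_restrict (μ : Measure X) [OpensMeasurableSpace X]
    [μ.IsOpenPosMeasure] (s : Set X) : closure (interior s) ⊆ (μ.restrict s).support := by
  have hs : interior s ⊆ (μ.restrict s).support := by
    simpa only [Measure.support_eq_univ, inter_univ] using
      Measure.interior_inter_support (μ := μ) (s := s)
  exact closure_minimal hs Measure.isClosed_support

theorem Icc_subset_support_restrict [LinearOrder X] [OrderTopology X] [DenselyOrdered X]
    [OpensMeasurableSpace X] (μ : Measure X) [μ.IsOpenPosMeasure] {a b : X} (hab : a ≠ b) :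
    Icc a b ⊆ (μ.restrict (Icc a b)).support := by
  simpa only [closure_interior_Icc hab] using closure_interior_subset_support_restrict μ (Icc a b)

end Support

theorem image_fst_inter_image_prodMk {X Y : Type*} (u : X → Y) (s : Set X) (O : Set (X × Y)) :
    Prod.fst '' (O ∩ (fun x => (x, u x)) '' s) = {x | (x, u x) ∈ O} ∩ s := by
  ext; aesop

section EssGraphClosure

variable {X Y : Type*} [TopologicalSpace X] [TopologicalSpace Y] [MeasurableSpace X]

/-- The closure of the graph of `u` with respect to the measure `μ`. It generalizes `clmSet`, with
the domain of `u` encoded by restricting `μ` to it (see `clmSet_eq_essGraphClosure`). -/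
def essGraphClosure (μ : Measure X) (u : X → Y) : Set (X × Y) :=
  {p | MapClusterPt p (ae μ) fun x => (x, u x)}

theorem mem_essGraphClosure_iff {μ : Measure X} {u : X → Y} {p : X × Y} :
    p ∈ essGraphClosure μ u ↔ ∀ O, IsOpen O → p ∈ O → 0 < μ {x | (x, u x) ∈ O} := by
  simp only [essGraphClosure, mem_ofPred_eq, (nhds_basis_opens p).mapClusterPt_iff_frequently,
    frequently_ae_iff, pos_iff_ne_zero]
  grind

theorem clmSet_eq_essGraphClosure (t0 t1 : ℝ) {m : ℕ} (u : ℝ → (Fin m → ℝ)) :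
    clmSet t0 t1 u = essGraphClosure (volume.restrict (Icc t0 t1)) u := by
  ext p
  simp only [clmSet, mem_ofPred_eq, mem_essGraphClosure_iff, image_fst_inter_image_prodMk,
    Measure.restrict_apply' measurableSet_Icc]

theorem clm_proj_surjective_general {μ : Measure X} {u : X → Y} {K : Set Y} (hK : IsCompact K)
    (hu : ∀ᵐ x ∂μ, u x ∈ K) :
    ∀ t ∈ μ.support, ∃ v ∈ K, (t, v) ∈ essGraphClosure μ u := fun _ ht =>
  exists_mapClusterPt_prodMk_of_isCompact
    (clusterPt_ae_iff_mem_support.2 ht).mapClusterPt_id hK hu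

end EssGraphClosure

/-- for `û ∈ L^∞([t0,t1], ℝ^m)`, the projection `π (t,v) = t` is surjective
from `clm(û)` onto `[t0, t1]`: for every `t ∈ [t0,t1]` there is `v` with `(t,v) ∈ clm(û)`. -/
theorem clm_proj_surjective {m : ℕ} (t0 t1 : ℝ) (ht : t0 < t1)
    (uh : ℝ → (Fin m → ℝ))
    (huh_meas : Measurable uh)
    (huh_bdd : ∃ C : ℝ, ∀ᵐ t ∂(volume.restrict (Icc t0 t1)), ‖uh t‖ ≤ C) :
    ∀ t ∈ Icc t0 t1, ∃ v : Fin m → ℝ, (t, v) ∈ clmSet t0 t1 uh := by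
  obtain ⟨C, hC⟩ := huh_bdd
  rw [clmSet_eq_essGraphClosure]
  exact fun t htI => (clm_proj_surjective_general (isCompact_closedBall 0 C)
    (hC.mono fun _ => mem_closedBall_zero_iff.2) t
    (Icc_subset_support_restrict volume ht.ne htI)).imp fun _ => And.right
end

section
/- Let û ∈ L^∞([t0,t1],R^m). Then clm(û) equals the intersection, over all Lebesgue-measurable sets E ⊆ [t0,t1] of full measure (mes E = t1 − t0), of the topological closures of the restricted graphs: clm(û) = ⋂_{E : mes E = t1−t0} cl{(t,û(t)) : t ∈ E}. -/
open MeasureTheory Set Filter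

/-! A point lies in `clm(û)` exactly when it is a cluster point of `t ↦ (t, û t)` along the filter
of almost every `t ∈ [t0, t1]`. The cluster points of a map along a filter are the points lying in
the closure of the image of every set of a basis of that filter, and the measurable subsets of full
measure form such a basis. -/

theorem fst_image_inter_graphOn {α β : Type*} (u : α → β) (I : Set α) (O : Set (α × β)) :
    Prod.fst '' (O ∩ I.graphOn u) = {t ∈ I | (t, u t) ∈ O} := by
  rw [graphOn, inter_comm, ← image_inter_preimage, image_image, image_id']
  rfl

section

variable {α β : Type*} [MeasurableSpace α] {μ : Measure α} {I : Set α}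

theorem hasBasis_ae_inf_principal (hI : NullMeasurableSet I μ) (hμI : μ I ≠ ⊤) :
    (ae μ ⊓ 𝓟 I).HasBasis (fun E ↦ MeasurableSet E ∧ E ⊆ I ∧ μ E = μ I) id := by
  refine ⟨fun s ↦ ⟨fun hs ↦ ?_, ?_⟩⟩
  · have inter_ae_eq : (I ∩ s : Set α) =ᵐ[μ] I :=
      inter_eventuallyEq_left.2 (mem_inf_principal.1 hs)
    obtain ⟨E, hEs, hE, hE_ae⟩ := (hI.congr inter_ae_eq.symm).exists_measurable_subset_ae_eq
    exact ⟨E, ⟨hE, hEs.trans inter_subset_left, measure_congr (hE_ae.trans inter_ae_eq)⟩,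
      hEs.trans inter_subset_right⟩
  · rintro ⟨E, ⟨hE, hEI, hμE⟩, hEs⟩
    have hE_ae : E =ᵐ[μ] I :=
      ae_eq_of_subset_of_measure_ge hEI hμE.ge hE.nullMeasurableSet hμI
    exact mem_inf_principal.2 (hE_ae.symm.le.mono fun _ hIE ht ↦ hEs (hIE ht))

variable [TopologicalSpace α] [TopologicalSpace β]

/-- The closure of the graph of `u` over `I` with respect to `μ`: the notion `clm` for an arbitrary
measure on a topological space. The sets measured here need not be measurable, so positivity refers
to the outer measure. -/
def measureClosureGraph (μ : Measure α) (I : Set α) (u : α → β) : Set (α × β) :=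
  {p | ∀ O : Set (α × β), IsOpen O → p ∈ O → 0 < μ (Prod.fst '' (O ∩ I.graphOn u))}

theorem mem_measureClosureGraph_iff_mapClusterPt {u : α → β} {p : α × β} :
    p ∈ measureClosureGraph μ I u ↔ MapClusterPt p (ae μ ⊓ 𝓟 I) fun t ↦ (t, u t) := by
  have frequently_iff_pos (O : Set (α × β)) :
      (∃ᶠ t in ae μ ⊓ 𝓟 I, (t, u t) ∈ O) ↔ 0 < μ (Prod.fst '' (O ∩ I.graphOn u)) := by
    rw [fst_image_inter_graphOn, pos_iff_ne_zero, frequently_inf_principal, frequently_ae_iff]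
  rw [(nhds_basis_opens p).mapClusterPt_iff_frequently]
  simp only [frequently_iff_pos, measureClosureGraph, mem_ofPred_eq, and_imp]
  exact forall_congr' fun _ ↦ forall_comm

theorem clm_eq_iInter_closure_graph_general (hI : NullMeasurableSet I μ) (hμI : μ I ≠ ⊤)
    (u : α → β) :
    measureClosureGraph μ I u =
      ⋂ E ∈ {E : Set α | MeasurableSet E ∧ E ⊆ I ∧ μ E = μ I}, closure (E.graphOn u) := by
  ext p
  rw [mem_measureClosureGraph_iff_mapClusterPt, MapClusterPt,
    ((hasBasis_ae_inf_principal hI hμI).map _).clusterPt_iff_forall_mem_closure, mem_iInter₂]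
  rfl

end

/-- for `û ∈ L^∞([t0,t1], ℝ^m)`, `clm(û)` equals the intersection, over all
Lebesgue measurable sets `E ⊆ [t0,t1]` of full measure `t1 - t0`, of the topological
closures of the restricted graphs `{(t, û t) : t ∈ E}`. -/
theorem clm_eq_iInter_closure_graph {m : ℕ} (t0 t1 : ℝ) (ht : t0 < t1)
    (uh : ℝ → (Fin m → ℝ))
    (huh_meas : Measurable uh)
    (huh_bdd : ∃ C : ℝ, ∀ᵐ t ∂(volume.restrict (Icc t0 t1)), ‖uh t‖ ≤ C) :
    clmSet t0 t1 uh =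
      ⋂ E ∈ {E : Set ℝ | MeasurableSet E ∧ E ⊆ Icc t0 t1 ∧
        volume E = ENNReal.ofReal (t1 - t0)},
        closure ((fun t => (t, uh t)) '' E) := by
  rw [← Real.volume_Icc]
  exact clm_eq_iInter_closure_graph_general nullMeasurableSet_Icc measure_Icc_lt_top.ne uh
end

section
/- If ŵ = (x̂,û) is a weak local minimum of Problem P, then for every δ > 0 the three cones Ω0, Ω_δ, Ω ⊆ X = R^n × L^∞([t0,t1],R^m) × R are disjoint: Ω0 ∩ Ω_δ ∩ Ω = ∅. -/
open MeasureTheory Set Filter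

/-- `u` is essentially bounded on `[t0,t1]`. -/
def EssBdd (t0 t1 : ℝ) {k : ℕ} (u : ℝ → (Fin k → ℝ)) : Prop :=
  ∃ C : ℝ, ∀ᵐ t ∂(volume.restrict (Icc t0 t1)), ‖u t‖ ≤ C

/-- Admissible process of Problem P. -/
def Admissible (t0 t1 : ℝ) {n m : ℕ}
    (f : (Fin n → ℝ) → (Fin m → ℝ) → (Fin n → ℝ))
    (G : (Fin n → ℝ) → (Fin m → ℝ) → ℝ)
    (x : ℝ → (Fin n → ℝ)) (u : ℝ → (Fin m → ℝ)) : Prop :=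
  Measurable u ∧ EssBdd t0 t1 u ∧
  IntegrableOn (fun s => f (x s) (u s)) (Icc t0 t1) ∧
  (∀ t ∈ Icc t0 t1, x t = x t0 + ∫ s in Icc t0 t, f (x s) (u s)) ∧
  (∀ᵐ t ∂(volume.restrict (Icc t0 t1)), G (x t) (u t) ≤ 0)

/-- `(x̂,û)` is a weak local minimum of Problem P. -/
def WeakLocalMin (t0 t1 : ℝ) {n m : ℕ}
    (J : (Fin n → ℝ) → (Fin n → ℝ) → ℝ)
    (f : (Fin n → ℝ) → (Fin m → ℝ) → (Fin n → ℝ))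
    (G : (Fin n → ℝ) → (Fin m → ℝ) → ℝ)
    (xh : ℝ → (Fin n → ℝ)) (uh : ℝ → (Fin m → ℝ)) : Prop :=
  Admissible t0 t1 f G xh uh ∧
  ∃ ε > (0:ℝ), ∀ x u, Admissible t0 t1 f G x u →
    (∀ t ∈ Icc t0 t1, ‖x t - xh t‖ ≤ ε) →
    (∀ᵐ t ∂(volume.restrict (Icc t0 t1)), ‖u t - uh t‖ ≤ ε) →
    J (xh t0) (xh t1) ≤ J (x t0) (x t1)

/-!
A common point `(x₀, u, q)` of the three cones is a direction of descent through admissible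
processes. Let `d = A(x₀, u)`. For small `ε` the control `û + ε u` and the initial value
`x̂(t₀) + ε x₀` have an exact trajectory `y_ε` of the nonlinear system, and
`y_ε = x̂ + ε d + o(ε)` uniformly on `[t₀, t₁]`. Along it the mixed constraint moves by
`ε (G_x d + G_u u) + o(ε)`, essentially uniformly: on `M_δ` it drops at least at the rate `q > 0`,
elsewhere its value at `ε = 0` is below `-δ`. The perturbed process is therefore admissible for
small `ε > 0`, while `J` strictly decreases to first order.
-/

open scoped Topology NNReal ENNReal

section UniformVariation

variable {ι V W : Type*} [NormedAddCommGroup V] [NormedSpace ℝ V] [NormedAddCommGroup W]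
  [NormedSpace ℝ W]

/-- The family `w ε` is a variation of `w₀` in the direction `d`, uniformly along `l`:
`w ε i = w₀ i + ε • d i + o(ε)` as `ε → 0`, with a remainder uniform in `i`. Taking `l = 𝓟 s` gives
uniformity on a set, `l = ae μ` essential uniformity. -/
def HasUniformVariation (w : ℝ → ι → V) (w₀ d : ι → V) (l : Filter ι) : Prop :=
  ∀ θ > 0, ∀ᶠ ε in 𝓝 (0 : ℝ), ∀ᶠ i in l, ‖w ε i - (w₀ i + ε • d i)‖ ≤ θ * |ε|

theorem eventually_mul_abs_le (C : ℝ) {r : ℝ} (hr : 0 < r) :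
    ∀ᶠ ε in 𝓝 (0 : ℝ), C * |ε| ≤ r := by
  have h : Tendsto (fun ε : ℝ => C * |ε|) (𝓝 0) (𝓝 0) :=
    Continuous.tendsto' (by fun_prop) _ _ (by simp)
  exact h.eventually (eventually_le_nhds hr)

theorem exists_norm_sub_sub_fderiv_le_of_isCompact {Φ : V → W} (hΦ : ContDiff ℝ 1 Φ) {K : Set V}
    (hK : IsCompact K) {c : ℝ} (hc : 0 < c) :
    ∃ η > 0, ∀ w ∈ K, ∀ w', ‖w' - w‖ ≤ η →
      ‖Φ w' - Φ w - fderiv ℝ Φ w (w' - w)‖ ≤ c * ‖w' - w‖ := by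
  have hcont : Continuous (fderiv ℝ Φ) := hΦ.continuous_fderiv one_ne_zero
  obtain ⟨r, hr, hunif⟩ := Metric.mem_uniformity_dist.1
    (hK.uniformContinuousAt_of_continuousAt _ (fun w _ => hcont.continuousAt)
      (Metric.dist_mem_uniformity hc))
  refine ⟨r / 2, by positivity, fun w hw w' hw' => ?_⟩
  refine (convex_ball w r).norm_image_sub_le_of_norm_fderiv_le' (𝕜 := ℝ)
    (fun z _ => hΦ.differentiable one_ne_zero z) (fun z hz => ?_) (Metric.mem_ball_self hr) ?_
  · rw [← dist_eq_norm, dist_comm]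
    exact (hunif (Metric.mem_ball'.1 hz) hw).le
  · rw [Metric.mem_ball, dist_eq_norm]
    linarith

namespace HasUniformVariation

variable {w : ℝ → ι → V} {w₀ d : ι → V} {l l' : Filter ι}

theorem affine (w₀ d : ι → V) (l : Filter ι) :
    HasUniformVariation (fun ε i => w₀ i + ε • d i) w₀ d l := fun θ hθ =>
  Eventually.of_forall fun ε => Eventually.of_forall fun i => by
    rw [sub_self, norm_zero]
    positivity

theorem mono (hw : HasUniformVariation w w₀ d l) (hl : l' ≤ l) : HasUniformVariation w w₀ d l' :=
  fun θ hθ => (hw θ hθ).mono fun _ h => h.filter_mono hl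

theorem prodMk (hw : HasUniformVariation w w₀ d l) {v : ℝ → ι → W} {v₀ e : ι → W}
    (hv : HasUniformVariation v v₀ e l) :
    HasUniformVariation (fun ε i => (w ε i, v ε i)) (fun i => (w₀ i, v₀ i))
      (fun i => (d i, e i)) l := fun θ hθ => by
  filter_upwards [hw θ hθ, hv θ hθ] with ε hwε hvε
  filter_upwards [hwε, hvε] with i hwi hvi using max_le hwi hvi

theorem apply_zero {i : ι} (hw : HasUniformVariation w w₀ d (pure i)) : w 0 i = w₀ i := by
  simpa [sub_eq_zero] using (hw 1 one_pos).self_of_nhds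

theorem hasDerivAt {i : ι} (hw : HasUniformVariation w w₀ d (pure i)) :
    HasDerivAt (fun ε => w ε i) (d i) 0 := by
  rw [hasDerivAt_iff_isLittleO_nhds_zero, Asymptotics.isLittleO_iff]
  intro θ hθ
  filter_upwards [hw θ hθ] with ε hε
  simpa [hw.apply_zero, sub_sub] using eventually_pure.1 hε

theorem eventually_norm_sub_le_mul (hw : HasUniformVariation w w₀ d l) {B : ℝ}
    (hd : ∀ᶠ i in l, ‖d i‖ ≤ B) :
    ∀ᶠ ε in 𝓝 (0 : ℝ), ∀ᶠ i in l, ‖w ε i - w₀ i‖ ≤ (B + 1) * |ε| := by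
  filter_upwards [hw 1 one_pos] with ε hε
  filter_upwards [hε, hd] with i hi hdi
  calc ‖w ε i - w₀ i‖ = ‖ε • d i + (w ε i - (w₀ i + ε • d i))‖ := by congr 1; abel
    _ ≤ |ε| * B + 1 * |ε| := by
      refine norm_add_le_of_le ?_ hi
      rw [norm_smul, Real.norm_eq_abs]
      gcongr
    _ = (B + 1) * |ε| := by ring

theorem eventually_norm_sub_le (hw : HasUniformVariation w w₀ d l) {B r : ℝ}
    (hd : ∀ᶠ i in l, ‖d i‖ ≤ B) (hr : 0 < r) :
    ∀ᶠ ε in 𝓝 (0 : ℝ), ∀ᶠ i in l, ‖w ε i - w₀ i‖ ≤ r := by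
  filter_upwards [hw.eventually_norm_sub_le_mul hd, eventually_mul_abs_le (B + 1) hr] with ε hε hεr
  exact hε.mono fun i hi => hi.trans hεr

theorem comp_contDiff (hw : HasUniformVariation w w₀ d l) {Φ : V → W} (hΦ : ContDiff ℝ 1 Φ)
    {K : Set V} (hK : IsCompact K) (hwK : ∀ᶠ i in l, w₀ i ∈ K) {B : ℝ}
    (hd : ∀ᶠ i in l, ‖d i‖ ≤ B) :
    HasUniformVariation (fun ε i => Φ (w ε i)) (fun i => Φ (w₀ i))
      (fun i => fderiv ℝ Φ (w₀ i) (d i)) l := by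
  intro c hc
  obtain ⟨C, hC⟩ := hK.exists_bound_of_continuousOn (hΦ.continuous_fderiv one_ne_zero).continuousOn
  obtain ⟨η, hη, hexp⟩ :=
    exists_norm_sub_sub_fderiv_le_of_isCompact hΦ hK (c := c / (2 * (|B| + 1))) (by positivity)
  have hd' : ∀ᶠ i in l, ‖d i‖ ≤ |B| := hd.mono fun i hi => hi.trans (le_abs_self B)
  filter_upwards [hw (c / (2 * (|C| + 1))) (by positivity), hw.eventually_norm_sub_le_mul hd',
    hw.eventually_norm_sub_le hd hη] with ε hrem hlip hclose
  filter_upwards [hrem, hlip, hclose, hwK] with i hrem hlip hclose hwK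
  have hderiv : ‖fderiv ℝ Φ (w₀ i)‖ ≤ |C| + 1 := by linarith [hC _ hwK, le_abs_self C]
  calc ‖Φ (w ε i) - (Φ (w₀ i) + ε • fderiv ℝ Φ (w₀ i) (d i))‖
      = ‖(Φ (w ε i) - Φ (w₀ i) - fderiv ℝ Φ (w₀ i) (w ε i - w₀ i))
          + fderiv ℝ Φ (w₀ i) (w ε i - (w₀ i + ε • d i))‖ := by
        congr 1
        simp only [map_sub, map_add, map_smul]
        abel
    _ ≤ c / (2 * (|B| + 1)) * ((|B| + 1) * |ε|) + (|C| + 1) * (c / (2 * (|C| + 1)) * |ε|) :=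
        norm_add_le_of_le ((hexp _ hwK _ hclose).trans (by gcongr))
          ((ContinuousLinearMap.le_of_opNorm_le _ hderiv _).trans (by gcongr))
    _ = c * |ε| := by field_simp; ring

/-- Below the level `-δ` the slack absorbs the variation; above it the strict decrease does. -/
theorem eventually_nonpos {w : ℝ → ι → ℝ} {w₀ d : ι → ℝ} (hw : HasUniformVariation w w₀ d l)
    {C δ q : ℝ} (hδ : 0 < δ) (hq : 0 < q) (hw₀ : ∀ᶠ i in l, w₀ i ≤ 0) (hd : ∀ᶠ i in l, d i ≤ C)
    (hactive : ∀ᶠ i in l, -δ ≤ w₀ i → d i ≤ -q) :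
    ∀ᶠ ε in 𝓝[>] (0 : ℝ), ∀ᶠ i in l, w ε i ≤ 0 := by
  filter_upwards [self_mem_nhdsWithin, nhdsWithin_le_nhds (hw q hq),
    nhdsWithin_le_nhds (eventually_mul_abs_le (C + q) hδ)] with ε hε hrem hεδ
  rw [abs_of_pos hε] at hrem hεδ
  filter_upwards [hrem, hw₀, hd, hactive] with i hrem hw₀ hd hactive
  have hupper : w ε i ≤ w₀ i + ε * d i + q * ε := by
    have := (le_abs_self _).trans hrem
    simp only [smul_eq_mul] at this
    linarith
  obtain hi | hi := le_or_gt (-δ) (w₀ i)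
  · have := mul_le_mul_of_nonneg_left (hactive hi) hε.le
    linarith
  · have := mul_le_mul_of_nonneg_left hd hε.le
    linarith

theorem eventually_apply_pair_lt (hw : HasUniformVariation w w₀ d l) {i j : ι} (hi : pure i ≤ l)
    (hj : pure j ≤ l) {Φ : V × V → ℝ} (hΦ : DifferentiableAt ℝ Φ (w₀ i, w₀ j))
    (hneg : fderiv ℝ Φ (w₀ i, w₀ j) (d i, d j) < 0) :
    ∀ᶠ ε in 𝓝[>] (0 : ℝ), Φ (w ε i, w ε j) < Φ (w₀ i, w₀ j) := by
  have hwi := hw.mono hi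
  have hwj := hw.mono hj
  have hderiv : HasDerivAt (fun ε => Φ (w ε i, w ε j)) (fderiv ℝ Φ (w₀ i, w₀ j) (d i, d j)) 0 :=
    hΦ.hasFDerivAt.comp_hasDerivAt_of_eq 0 (hwi.hasDerivAt.prodMk hwj.hasDerivAt)
      (by rw [hwi.apply_zero, hwj.apply_zero])
  filter_upwards [hderiv.hasDerivWithinAt.limsup_slope_le' self_notMem_Ioi hneg,
    self_mem_nhdsWithin] with ε hslope hε
  rw [slope_def_field, sub_zero, hwi.apply_zero, hwj.apply_zero, div_lt_iff₀ hε, zero_mul,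
    sub_neg] at hslope
  exact hslope

end HasUniformVariation

end UniformVariation

section Caratheodory

theorem le_mul_exp_of_le_add_integral {φ : ℝ → ℝ} {a b c K : ℝ} (hK : 0 ≤ K)
    (hφ : ContinuousOn φ (Icc a b)) (h : ∀ t ∈ Icc a b, φ t ≤ c + K * ∫ s in Icc a t, φ s) :
    ∀ t ∈ Icc a b, φ t ≤ c * Real.exp (K * (t - a)) := by
  intro t ht
  have hab : a ≤ b := ht.1.trans ht.2
  let ψ : ℝ → ℝ := IccExtend hab ((Icc a b).domRestrict φ)
  have hψ : Continuous ψ := hφ.domRestrict.Icc_extend'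
  have hψφ : EqOn ψ φ (Icc a b) := fun s hs => IccExtend_of_mem hab _ hs
  let Ψ : ℝ → ℝ := fun r => c + K * ∫ s in a..r, ψ s
  have hΨ : ∀ r, HasDerivAt Ψ (K * ψ r) r := fun r =>
    ((hψ.integral_hasStrictDerivAt a r).hasDerivAt.const_mul K).const_add c
  have hφΨ : ∀ r ∈ Icc a b, φ r ≤ Ψ r := fun r hr => by
    refine (h r hr).trans_eq ?_
    simp only [Ψ]
    rw [intervalIntegral.integral_of_le hr.1, ← integral_Icc_eq_integral_Ioc,
      setIntegral_congr_fun measurableSet_Icc (hψφ.mono (Icc_subset_Icc_right hr.2))]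
  refine (hφΨ t ht).trans ?_
  rw [← gronwallBound_ε0]
  refine le_gronwallBound_of_liminf_deriv_right_le
    (fun r _ => (hΨ r).continuousAt.continuousWithinAt)
    (fun r _ _ => (hΨ r).hasDerivWithinAt.liminf_right_slope_le) (by simp [Ψ])
    (fun r hr => ?_) t ht
  have hr' := Ico_subset_Icc_self hr
  rw [add_zero, hψφ hr']
  exact mul_le_mul_of_nonneg_left (hφΨ r hr') hK

theorem integral_Icc_exp_mul_sub_le {L : ℝ} (hL : 0 < L) {a t : ℝ} (hat : a ≤ t) :
    ∫ s in Icc a t, Real.exp (L * (s - a)) ≤ Real.exp (L * (t - a)) / L := by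
  rw [integral_Icc_eq_integral_Ioc, ← intervalIntegral.integral_of_le hat,
    intervalIntegral.integral_comp_sub_right (fun s => Real.exp (L * s)),
    intervalIntegral.integral_comp_mul_left _ hL.ne', integral_exp, smul_eq_mul,
    inv_mul_eq_div]
  gcongr
  linarith [Real.exp_pos (L * (a - a))]

variable {E : Type*} [NormedAddCommGroup E] [NormedSpace ℝ E] {g ℓ : ℝ → E → E} {K : ℝ≥0}
  {a b : ℝ} {x₀ d₀ : E} {x y d : ℝ → E}

/-- `x` solves `ẋ = g(t, x)`, `x(a) = x₀` on `[a, b]` in the sense of Carathéodory, in integral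
form. Integrability is part of the definition because the Bochner integral of a non-integrable
function is `0`. -/
structure IsCaratheodorySolution (g : ℝ → E → E) (a b : ℝ) (x₀ : E) (x : ℝ → E) : Prop where
  integrableOn : IntegrableOn (fun s => g s (x s)) (Icc a b)
  eq_add_integral : ∀ t ∈ Icc a b, x t = x₀ + ∫ s in Icc a t, g s (x s)

/-- A Carathéodory right-hand side on `[a, b]`: Lipschitz in the state for almost every time, and
integrable in time along every continuous curve. -/
structure IsLipschitzField (g : ℝ → E → E) (K : ℝ≥0) (a b : ℝ) : Prop where
  lipschitzWith : ∀ᵐ s ∂volume.restrict (Icc a b), LipschitzWith K (g s)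
  integrableOn_comp : ∀ ⦃y : ℝ → E⦄, ContinuousOn y (Icc a b) →
    IntegrableOn (fun s => g s (y s)) (Icc a b)

theorem norm_setIntegral_sub_le_of_lipschitzWith
    (hg : ∀ᵐ s ∂volume.restrict (Icc a b), LipschitzWith K (g s))
    (hx : ContinuousOn x (Icc a b)) (hy : ContinuousOn y (Icc a b))
    (hgx : IntegrableOn (fun s => g s (x s)) (Icc a b))
    (hgy : IntegrableOn (fun s => g s (y s)) (Icc a b)) {t : ℝ} (ht : t ∈ Icc a b) :
    ‖(∫ s in Icc a t, g s (x s)) - ∫ s in Icc a t, g s (y s)‖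
      ≤ K * ∫ s in Icc a t, ‖x s - y s‖ := by
  have hsub : Icc a t ⊆ Icc a b := Icc_subset_Icc_right ht.2
  rw [← integral_sub (hgx.mono_set hsub) (hgy.mono_set hsub), ← integral_const_mul]
  refine norm_integral_le_of_norm_le
    (((hx.sub hy).norm.mono hsub).integrableOn_Icc.const_mul _) ?_
  filter_upwards [ae_restrict_of_ae_restrict_of_subset hsub hg] with s hs
  exact hs.norm_sub_le (x s) (y s)

namespace IsCaratheodorySolution

theorem continuousOn (hx : IsCaratheodorySolution g a b x₀ x) : ContinuousOn x (Icc a b) :=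
  (continuousOn_const.add (intervalIntegral.continuousOn_primitive_Icc hx.integrableOn)).congr
    hx.eq_add_integral

theorem apply_left (hx : IsCaratheodorySolution g a b x₀ x) (hab : a ≤ b) : x a = x₀ := by
  simpa using hx.eq_add_integral a (left_mem_Icc.2 hab)

theorem mono (hx : IsCaratheodorySolution g a b x₀ x) {c : ℝ} (hc : c ≤ b) :
    IsCaratheodorySolution g a c x₀ x :=
  ⟨hx.integrableOn.mono_set (Icc_subset_Icc_right hc),
    fun t ht => hx.eq_add_integral t (Icc_subset_Icc_right hc ht)⟩

theorem congr (hx : IsCaratheodorySolution g a b x₀ x)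
    (h : ∀ᵐ s ∂volume.restrict (Icc a b), g s (x s) = ℓ s (x s)) :
    IsCaratheodorySolution ℓ a b x₀ x :=
  ⟨Integrable.congr hx.integrableOn h, fun t ht => by
    rw [hx.eq_add_integral t ht, integral_congr_ae
      (ae_restrict_of_ae_restrict_of_subset (Icc_subset_Icc_right ht.2) h)]⟩

theorem norm_sub_le (hx : IsCaratheodorySolution g a b x₀ x)
    (hg : ∀ᵐ s ∂volume.restrict (Icc a b), LipschitzWith K (g s))
    (hy : ContinuousOn y (Icc a b)) (hgy : IntegrableOn (fun s => g s (y s)) (Icc a b)) {θ : ℝ}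
    (hθ : ∀ t ∈ Icc a b, ‖y t - (x₀ + ∫ s in Icc a t, g s (y s))‖ ≤ θ) :
    ∀ t ∈ Icc a b, ‖y t - x t‖ ≤ θ * Real.exp (K * (t - a)) := by
  refine le_mul_exp_of_le_add_integral K.coe_nonneg (hy.sub hx.continuousOn).norm fun t ht => ?_
  have hsplit : y t - x t = (y t - (x₀ + ∫ s in Icc a t, g s (y s)))
      + ((∫ s in Icc a t, g s (y s)) - ∫ s in Icc a t, g s (x s)) := by
    rw [hx.eq_add_integral t ht]
    abel
  rw [hsplit]
  exact norm_add_le_of_le (hθ t ht)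
    (norm_setIntegral_sub_le_of_lipschitzWith hg hy hx.continuousOn hgy hx.integrableOn ht)

theorem eqOn (hx : IsCaratheodorySolution g a b x₀ x) (hy : IsCaratheodorySolution g a b x₀ y)
    (hg : ∀ᵐ s ∂volume.restrict (Icc a b), LipschitzWith K (g s)) : EqOn y x (Icc a b) :=
  fun t ht => by
    have hyx := hx.norm_sub_le hg hy.continuousOn hy.integrableOn (θ := 0)
      (fun s hs => by rw [← hy.eq_add_integral s hs, sub_self, norm_zero]) t ht
    rwa [zero_mul, norm_le_zero_iff, sub_eq_zero] at hyx

theorem norm_add_smul_sub_integral_le (hx : IsCaratheodorySolution g a b x₀ x)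
    (hd : IsCaratheodorySolution ℓ a b d₀ d) {h : ℝ → E} (hh : IntegrableOn h (Icc a b))
    {ε c : ℝ} (hc : ∀ᵐ s ∂volume.restrict (Icc a b),
      ‖h s - (g s (x s) + ε • ℓ s (d s))‖ ≤ c) {t : ℝ} (ht : t ∈ Icc a b) :
    ‖x t + ε • d t - (x₀ + ε • d₀ + ∫ s in Icc a t, h s)‖ ≤ c * (t - a) := by
  have hsub : Icc a t ⊆ Icc a b := Icc_subset_Icc_right ht.2
  have hgx := hx.integrableOn.mono_set hsub
  have hℓd := (hd.integrableOn.mono_set hsub).fun_smul ε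
  have hdefect : x₀ + ε • d₀ + (∫ s in Icc a t, h s) - (x t + ε • d t)
      = ∫ s in Icc a t, (h s - (g s (x s) + ε • ℓ s (d s))) := by
    rw [integral_sub (hh.mono_set hsub) (hgx.fun_add hℓd), integral_add hgx hℓd, integral_smul,
      hx.eq_add_integral t ht, hd.eq_add_integral t ht, smul_add]
    abel
  rw [norm_sub_rev, hdefect]
  refine (norm_integral_le_of_norm_le_const
    (ae_restrict_of_ae_restrict_of_subset hsub hc)).trans_eq ?_
  rw [measureReal_restrict_apply_univ, Real.volume_real_Icc_of_le ht.1]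

end IsCaratheodorySolution

namespace IsLipschitzField

theorem norm_setIntegral_sub_le_mul_exp (hg : IsLipschitzField g K a b)
    (hx : ContinuousOn x (Icc a b)) (hy : ContinuousOn y (Icc a b)) {L D : ℝ} (hL : 0 < L)
    (hD : 0 ≤ D) (hxy : ∀ s ∈ Icc a b, ‖x s - y s‖ ≤ D * Real.exp (L * (s - a))) {t : ℝ}
    (ht : t ∈ Icc a b) :
    ‖(∫ s in Icc a t, g s (x s)) - ∫ s in Icc a t, g s (y s)‖
      ≤ K / L * D * Real.exp (L * (t - a)) := by
  have hsub : Icc a t ⊆ Icc a b := Icc_subset_Icc_right ht.2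
  calc ‖(∫ s in Icc a t, g s (x s)) - ∫ s in Icc a t, g s (y s)‖
      ≤ K * ∫ s in Icc a t, ‖x s - y s‖ :=
        norm_setIntegral_sub_le_of_lipschitzWith hg.lipschitzWith hx hy (hg.integrableOn_comp hx)
          (hg.integrableOn_comp hy) ht
    _ ≤ K * ∫ s in Icc a t, D * Real.exp (L * (s - a)) := by
        refine mul_le_mul_of_nonneg_left ?_ K.coe_nonneg
        have hexp : ContinuousOn (fun s => D * Real.exp (L * (s - a))) (Icc a t) := by fun_prop
        have hnorm : ContinuousOn (fun s => ‖x s - y s‖) (Icc a t) := (hx.sub hy).norm.mono hsub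
        exact setIntegral_mono_on hnorm.integrableOn_Icc hexp.integrableOn_Icc measurableSet_Icc
          fun s hs => hxy s (hsub hs)
    _ ≤ K * (D * (Real.exp (L * (t - a)) / L)) := by
        rw [integral_const_mul]
        gcongr
        exact integral_Icc_exp_mul_sub_le hL ht.1
    _ = K / L * D * Real.exp (L * (t - a)) := by ring

/-- Picard iteration is a contraction for the norm weighted by `exp (-L (t - a))`, `L > K`, so no
smallness of `b - a` is needed. -/
theorem exists_isCaratheodorySolution [CompleteSpace E] (hg : IsLipschitzField g K a b)
    (hab : a ≤ b) (x₀ : E) : ∃ x, IsCaratheodorySolution g a b x₀ x := by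
  let L : ℝ := 2 * K + 1
  have hL : 0 < L := by positivity
  let Y : C(Icc a b, E) → ℝ → E := fun z s => Real.exp (L * (s - a)) • IccExtend hab z s
  have hY : ∀ z, ContinuousOn (Y z) (Icc a b) := fun z => by
    have := z.continuous.Icc_extend' (h := hab)
    fun_prop
  let P : C(Icc a b, E) → ℝ → E := fun z t =>
    Real.exp (-(L * (t - a))) • (x₀ + ∫ s in Icc a t, g s (Y z s))
  have hP : ∀ z, ContinuousOn (P z) (Icc a b) := fun z => by
    have := intervalIntegral.continuousOn_primitive_Icc (hg.integrableOn_comp (hY z))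
    fun_prop
  let T : C(Icc a b, E) → C(Icc a b, E) := fun z =>
    ⟨(Icc a b).domRestrict (P z), (hP z).domRestrict⟩
  have hYdist : ∀ z z' s, ‖Y z s - Y z' s‖ ≤ dist z z' * Real.exp (L * (s - a)) := fun z z' s => by
    rw [← smul_sub, norm_smul, Real.norm_of_nonneg (Real.exp_nonneg _), mul_comm, ← dist_eq_norm]
    gcongr
    exact ContinuousMap.dist_apply_le_dist _
  have hT : ContractingWith (1 / 2) T := by
    refine ⟨by norm_num, LipschitzWith.of_dist_le_mul fun z z' => ?_⟩
    refine (ContinuousMap.dist_le (by positivity)).2 fun ⟨t, ht⟩ => ?_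
    change dist (P z t) (P z' t) ≤ _
    rw [dist_eq_norm, ← smul_sub, norm_smul, Real.norm_of_nonneg (Real.exp_nonneg _),
      add_sub_add_left_eq_sub, Real.exp_neg, inv_mul_le_iff₀ (Real.exp_pos _), mul_comm]
    refine (hg.norm_setIntegral_sub_le_mul_exp (hY z) (hY z') hL dist_nonneg
      (fun s _ => hYdist z z' s) ht).trans ?_
    gcongr
    rw [div_le_iff₀ hL]
    simp only [L]
    push_cast
    linarith
  obtain ⟨z, hz⟩ : ∃ z, T z = z := ⟨_, hT.fixedPoint_isFixedPt⟩
  refine ⟨Y z, hg.integrableOn_comp (hY z), fun t ht => ?_⟩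
  have hzt : IccExtend hab z t = P z t :=
    (IccExtend_of_mem hab _ ht).trans (DFunLike.congr_fun hz ⟨t, ht⟩).symm
  simp only [Y, hzt, P, smul_smul, ← Real.exp_add, add_neg_cancel, Real.exp_zero, one_smul]

/-- Integrability need not be assumed: while the right-hand side is integrable along `x`, `x` is the
true solution, and afterwards the integral has the junk value `0`, so `x` is constant. -/
theorem isCaratheodorySolution_of_eq_add_integral [CompleteSpace E]
    (hg : IsLipschitzField g K a b) (hab : a ≤ b)
    (hx : ∀ t ∈ Icc a b, x t = x₀ + ∫ s in Icc a t, g s (x s)) :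
    IsCaratheodorySolution g a b x₀ x := by
  obtain ⟨e, he⟩ := hg.exists_isCaratheodorySolution hab x₀
  let S : Set ℝ := {t ∈ Icc a b | IntegrableOn (fun s => g s (x s)) (Icc a t)}
  have hSsub : S ⊆ Icc a b := sep_subset _ _
  have hS : MeasurableSet S := OrdConnected.measurableSet
    ⟨fun r hr s hs t ht => ⟨⟨hr.1.1.trans ht.1, ht.2.trans hs.1.2⟩,
      hs.2.mono_set (Icc_subset_Icc_right ht.2)⟩⟩
  have hxS : EqOn x e S := fun t ⟨ht, hint⟩ =>
    (he.mono ht.2).eqOn ⟨hint, fun s hs => hx s (Icc_subset_Icc_right ht.2 hs)⟩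
      (ae_restrict_of_ae_restrict_of_subset (Icc_subset_Icc_right ht.2) hg.lipschitzWith)
      (right_mem_Icc.2 ht.1)
  have hxSc : ∀ t ∈ Icc a b \ S, x t = x₀ := fun t ⟨ht, htS⟩ => by
    rw [hx t ht, integral_undef fun hint => htS ⟨ht, hint⟩, add_zero]
  refine ⟨?_, hx⟩
  rw [← union_sdiff_cancel hSsub, integrableOn_union]
  constructor
  · exact (he.integrableOn.mono_set hSsub).congr_fun (fun t ht => by simp only [hxS ht]) hS
  · exact ((hg.integrableOn_comp (continuousOn_const (c := x₀))).mono_set sdiff_subset).congr_fun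
      (fun t ht => by simp only [hxSc t ht]) (measurableSet_Icc.diff hS)

end IsLipschitzField

theorem exists_isCaratheodorySolution_hasUniformVariation [CompleteSpace E]
    {h : ℝ → ℝ → E → E} (hab : a ≤ b) (hh : ∀ ε, IsLipschitzField (h ε) K a b)
    (hx : IsCaratheodorySolution g a b x₀ x) (hd : IsCaratheodorySolution ℓ a b d₀ d)
    (hgℓ : HasUniformVariation (fun ε s => h ε s (x s + ε • d s)) (fun s => g s (x s))
      (fun s => ℓ s (d s)) (ae (volume.restrict (Icc a b)))) :
    ∃ y : ℝ → ℝ → E, (∀ ε, IsCaratheodorySolution (h ε) a b (x₀ + ε • d₀) (y ε)) ∧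
      HasUniformVariation y x d (𝓟 (Icc a b)) := by
  choose y hy using fun ε => (hh ε).exists_isCaratheodorySolution hab (x₀ + ε • d₀)
  refine ⟨y, hy, fun θ hθ => ?_⟩
  let M : ℝ := (b - a) * Real.exp (K * (b - a)) + 1
  have hM : 0 < M := add_pos_of_nonneg_of_pos
    (mul_nonneg (sub_nonneg.2 hab) (Real.exp_nonneg _)) one_pos
  filter_upwards [hgℓ (θ / M) (by positivity)] with ε hε
  have hcont : ContinuousOn (fun s => x s + ε • d s) (Icc a b) :=
    hx.continuousOn.add (hd.continuousOn.const_smul ε)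
  have hint := (hh ε).integrableOn_comp hcont
  have hdefect : ∀ t ∈ Icc a b, _ ≤ θ / M * |ε| * (b - a) := fun t ht =>
    (hx.norm_add_smul_sub_integral_le hd hint hε ht).trans (by gcongr; exact ht.2)
  refine eventually_principal.2 fun t ht => ?_
  rw [norm_sub_rev]
  calc ‖x t + ε • d t - y ε t‖
      ≤ θ / M * |ε| * (b - a) * Real.exp (K * (t - a)) :=
        (hy ε).norm_sub_le (hh ε).lipschitzWith hcont hint hdefect t ht
    _ ≤ θ / M * |ε| * (b - a) * Real.exp (K * (b - a)) := by gcongr; exact ht.2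
    _ = θ / M * |ε| * (M - 1) := by simp only [M]; ring
    _ ≤ θ / M * |ε| * M := by gcongr; linarith
    _ = θ * |ε| := by field_simp

end Caratheodory

section EssentiallyBounded

variable {α V W : Type*} [MeasurableSpace α] {μ : Measure α} [NormedAddCommGroup V]
  [NormedAddCommGroup W]

theorem exists_ae_norm_le_of_memLp_top {w : α → V} (hw : MemLp w ∞ μ) :
    ∃ R, ∀ᵐ s ∂μ, ‖w s‖ ≤ R :=
  ⟨_, ae_le_lpNorm_exponent_top hw⟩

theorem memLp_top_comp_of_continuous [ProperSpace V] {w : α → V} (hw : MemLp w ∞ μ) {Φ : V → W}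
    (hΦ : Continuous Φ) : MemLp (fun s => Φ (w s)) ∞ μ := by
  obtain ⟨R, hR⟩ := exists_ae_norm_le_of_memLp_top hw
  obtain ⟨C, hC⟩ :=
    (isCompact_closedBall (0 : V) R).exists_bound_of_continuousOn hΦ.continuousOn
  refine memLp_top_of_bound (hΦ.comp_aestronglyMeasurable hw.aestronglyMeasurable) C ?_
  exact hR.mono fun s hs => hC _ (mem_closedBall_zero_iff.2 hs)

theorem memLp_top_of_continuousOn_Icc {x : ℝ → V} {a b : ℝ} (hx : ContinuousOn x (Icc a b)) :
    MemLp x ∞ (volume.restrict (Icc a b)) := by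
  obtain ⟨C, hC⟩ := isCompact_Icc.exists_bound_of_continuousOn hx
  exact memLp_top_of_bound (hx.aestronglyMeasurable measurableSet_Icc) C
    ((ae_restrict_mem measurableSet_Icc).mono hC)

theorem memLp_top_prodMk_of_continuousOn_Icc {x : ℝ → V} {v : ℝ → W} {a b : ℝ}
    (hx : ContinuousOn x (Icc a b)) (hv : MemLp v ∞ (volume.restrict (Icc a b))) :
    MemLp (fun s => (x s, v s)) ∞ (volume.restrict (Icc a b)) :=
  MemLp.of_fst_snd ⟨memLp_top_of_continuousOn_Icc hx, hv⟩

theorem memLp_top_fderiv_apply [NormedSpace ℝ V] [ProperSpace V] [NormedSpace ℝ W] {Φ : V → W}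
    (hΦ : ContDiff ℝ 1 Φ) {w e : α → V} (hw : MemLp w ∞ μ) (he : MemLp e ∞ μ) :
    MemLp (fun s => fderiv ℝ Φ (w s) (e s)) ∞ μ :=
  memLp_top_comp_of_continuous (MemLp.of_fst_snd (f := fun s => (w s, e s)) ⟨hw, he⟩)
    (((hΦ.continuous_fderiv one_ne_zero).comp continuous_fst).clm_apply continuous_snd)

end EssentiallyBounded

theorem exists_contDiff_lipschitzWith_eqOn_closedBall {V W : Type*} [NormedAddCommGroup V]
    [NormedSpace ℝ V] [FiniteDimensional ℝ V] [NormedAddCommGroup W] [NormedSpace ℝ W]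
    {F : V → W} (hF : ContDiff ℝ 1 F) (R : ℝ) :
    ∃ (F' : V → W) (K : ℝ≥0), ContDiff ℝ 1 F' ∧ LipschitzWith K F' ∧
      EqOn F' F (Metric.closedBall 0 R) := by
  let χ : ContDiffBump (0 : V) := ⟨max R 1, max R 1 + 1, by positivity, by linarith⟩
  have hχF : ContDiff ℝ 1 fun p => χ p • F p := χ.contDiff.smul hF
  obtain ⟨K, hK⟩ := hχF.lipschitzWith_of_hasCompactSupport χ.hasCompactSupport.smul_right
    one_ne_zero
  refine ⟨_, K, hχF, hK, fun p hp => ?_⟩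
  simp only [χ.one_of_mem_closedBall (Metric.closedBall_subset_closedBall (le_max_left R 1) hp),
    one_smul]

theorem fderiv_uncurry_apply {E₁ E₂ W : Type*} [NormedAddCommGroup E₁] [NormedSpace ℝ E₁]
    [NormedAddCommGroup E₂] [NormedSpace ℝ E₂] [NormedAddCommGroup W] [NormedSpace ℝ W]
    {φ : E₁ → E₂ → W} {p : E₁} {q : E₂} (h : DifferentiableAt ℝ (Function.uncurry φ) (p, q))
    (d : E₁) (e : E₂) :
    fderiv ℝ (Function.uncurry φ) (p, q) (d, e)
      = fderiv ℝ (fun p' => φ p' q) p d + fderiv ℝ (fun q' => φ p q') q e := by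
  let D := fderiv ℝ (Function.uncurry φ) (p, q)
  have hleft : HasFDerivAt (fun p' => φ p' q) (D ∘L .inl ℝ E₁ E₂) p :=
    h.hasFDerivAt.comp (f := fun p' => (p', q)) p (hasFDerivAt_prodMk_left p q)
  have hright : HasFDerivAt (fun q' => φ p q') (D ∘L .inr ℝ E₁ E₂) q :=
    HasFDerivAt.comp q h.hasFDerivAt (hasFDerivAt_prodMk_right p q)
  simp [hleft.fderiv, hright.fderiv, D, ← map_add]

section ControlSystem

variable {E U : Type*} [NormedAddCommGroup E] [NormedSpace ℝ E] [FiniteDimensional ℝ E]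
  [NormedAddCommGroup U] [NormedSpace ℝ U] [FiniteDimensional ℝ U]
  {F : E × U → E} {K : ℝ≥0} {a b : ℝ} {x₀ d₀ : E} {x d : ℝ → E} {v u : ℝ → U}

/-- The right-hand side of the equation in variations of the control system `ẋ = F(x, v)` along the
process `(x, v)`, for the variation `u` of the control. -/
noncomputable def variationField (F : E × U → E) (x : ℝ → E) (v u : ℝ → U) : ℝ → E → E :=
  fun s z => fderiv ℝ F (x s, v s) (z, u s)

theorem isLipschitzField_of_lipschitzWith (hF : LipschitzWith K F)
    (hv : MemLp v ∞ (volume.restrict (Icc a b))) :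
    IsLipschitzField (fun s z => F (z, v s)) K a b where
  lipschitzWith := Eventually.of_forall fun s => by
    simpa [Function.comp_def] using hF.comp (LipschitzWith.prodMk_right (v s))
  integrableOn_comp _ hy := (memLp_top_comp_of_continuous
    (memLp_top_prodMk_of_continuousOn_Icc hy hv) hF.continuous).integrable le_top

theorem exists_isLipschitzField_variationField (hF : ContDiff ℝ 1 F) (hx : ContinuousOn x (Icc a b))
    (hv : MemLp v ∞ (volume.restrict (Icc a b))) (hu : MemLp u ∞ (volume.restrict (Icc a b))) :
    ∃ K, IsLipschitzField (variationField F x v u) K a b := by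
  have hT : MemLp (fun s => fderiv ℝ F (x s, v s)) ∞ (volume.restrict (Icc a b)) :=
    memLp_top_comp_of_continuous (memLp_top_prodMk_of_continuousOn_Icc hx hv)
      (hF.continuous_fderiv one_ne_zero)
  obtain ⟨C, hC⟩ := exists_ae_norm_le_of_memLp_top hT
  refine ⟨C.toNNReal, ?_, fun y hy => ?_⟩
  · filter_upwards [hC] with s hs
    have hs' : ‖fderiv ℝ F (x s, v s)‖₊ ≤ C.toNNReal := NNReal.le_toNNReal_of_coe_le hs
    simpa [Function.comp_def] using! ((fderiv ℝ F (x s, v s)).lipschitz.weaken hs').comp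
      (LipschitzWith.prodMk_right (u s))
  · exact (memLp_top_fderiv_apply hF (memLp_top_prodMk_of_continuousOn_Icc hx hv)
      (memLp_top_prodMk_of_continuousOn_Icc hy hu)).integrable le_top

namespace IsCaratheodorySolution

theorem exists_hasUniformVariation_of_lipschitzWith (hab : a ≤ b) (hF : ContDiff ℝ 1 F)
    (hFK : LipschitzWith K F) (hv : MemLp v ∞ (volume.restrict (Icc a b)))
    (hu : MemLp u ∞ (volume.restrict (Icc a b)))
    (hx : IsCaratheodorySolution (fun s z => F (z, v s)) a b x₀ x)
    (hd : IsCaratheodorySolution (variationField F x v u) a b d₀ d) :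
    ∃ y : ℝ → ℝ → E,
      (∀ ε, IsCaratheodorySolution (fun s z => F (z, v s + ε • u s)) a b (x₀ + ε • d₀) (y ε)) ∧
      HasUniformVariation y x d (𝓟 (Icc a b)) := by
  obtain ⟨R, hR⟩ := exists_ae_norm_le_of_memLp_top
    (memLp_top_prodMk_of_continuousOn_Icc hx.continuousOn hv)
  obtain ⟨B, hB⟩ := exists_ae_norm_le_of_memLp_top
    (memLp_top_prodMk_of_continuousOn_Icc hd.continuousOn hu)
  refine exists_isCaratheodorySolution_hasUniformVariation hab
    (fun ε => isLipschitzField_of_lipschitzWith hFK (hv.add (hu.const_smul ε))) hx hd ?_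
  exact ((HasUniformVariation.affine x d _).prodMk (.affine v u _)).comp_contDiff hF
    (isCompact_closedBall (0 : E × U) R) (hR.mono fun s hs => mem_closedBall_zero_iff.2 hs) hB

/-- The dynamics can be cut off outside a ball containing all processes near `(x, v)`. -/
theorem exists_hasUniformVariation (hab : a ≤ b) (hF : ContDiff ℝ 1 F)
    (hv : MemLp v ∞ (volume.restrict (Icc a b))) (hu : MemLp u ∞ (volume.restrict (Icc a b)))
    (hx : IsCaratheodorySolution (fun s z => F (z, v s)) a b x₀ x)
    (hd : IsCaratheodorySolution (variationField F x v u) a b d₀ d) :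
    ∃ y : ℝ → ℝ → E,
      (∀ᶠ ε in 𝓝 (0 : ℝ),
        IsCaratheodorySolution (fun s z => F (z, v s + ε • u s)) a b (x₀ + ε • d₀) (y ε)) ∧
      HasUniformVariation y x d (𝓟 (Icc a b)) := by
  obtain ⟨R, hR⟩ := exists_ae_norm_le_of_memLp_top
    (memLp_top_prodMk_of_continuousOn_Icc hx.continuousOn hv)
  obtain ⟨B, hB⟩ := exists_ae_norm_le_of_memLp_top
    (memLp_top_prodMk_of_continuousOn_Icc hd.continuousOn hu)
  obtain ⟨F', K, hF', hK, hF'F⟩ := exists_contDiff_lipschitzWith_eqOn_closedBall hF (R + 1)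
  have hx' : IsCaratheodorySolution (fun s z => F' (z, v s)) a b x₀ x := hx.congr <| by
    filter_upwards [hR] with s hs
    exact (hF'F (mem_closedBall_zero_iff.2 (hs.trans (by linarith)))).symm
  have hd' : IsCaratheodorySolution (variationField F' x v u) a b d₀ d := hd.congr <| by
    filter_upwards [hR] with s hs
    have hFF' : F' =ᶠ[𝓝 (x s, v s)] F := hF'F.eventuallyEq_of_mem
      (Metric.closedBall_mem_nhds_of_mem (mem_ball_zero_iff.2 (hs.trans_lt (by linarith))))
    rw [variationField, variationField, hFF'.fderiv_eq]
  obtain ⟨y, hy, hyx⟩ := hx'.exists_hasUniformVariation_of_lipschitzWith hab hF' hK hv hu hd'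
  refine ⟨y, ?_, hyx⟩
  have hae : ae (volume.restrict (Icc a b)) ≤ 𝓟 (Icc a b) :=
    le_principal_iff.2 (ae_restrict_mem measurableSet_Icc)
  filter_upwards [((hyx.mono hae).prodMk (.affine v u _)).eventually_norm_sub_le hB one_pos]
    with ε hε
  refine (hy ε).congr ?_
  filter_upwards [hR, hε] with s hs hεs
  exact hF'F (mem_closedBall_zero_iff.2 (by
    have := norm_le_norm_add_norm_sub' (y ε s, v s + ε • u s) (x s, v s)
    linarith))

end IsCaratheodorySolution

end ControlSystem

section Admissible

variable {t0 t1 : ℝ} {n m : ℕ} {f : (Fin n → ℝ) → (Fin m → ℝ) → (Fin n → ℝ)}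
  {G : (Fin n → ℝ) → (Fin m → ℝ) → ℝ} {x d : ℝ → (Fin n → ℝ)} {v u : ℝ → (Fin m → ℝ)}
  {d₀ : Fin n → ℝ}

theorem EssBdd.memLp_top {k : ℕ} {w : ℝ → (Fin k → ℝ)} (hw : EssBdd t0 t1 w) (hm : Measurable w) :
    MemLp w ∞ (volume.restrict (Icc t0 t1)) :=
  let ⟨C, hC⟩ := hw
  memLp_top_of_bound hm.aestronglyMeasurable C hC

namespace Admissible

theorem memLp_top (h : Admissible t0 t1 f G x v) : MemLp v ∞ (volume.restrict (Icc t0 t1)) :=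
  h.2.1.memLp_top h.1

theorem isCaratheodorySolution (h : Admissible t0 t1 f G x v) :
    IsCaratheodorySolution (fun s z => Function.uncurry f (z, v s)) t0 t1 (x t0) x :=
  ⟨h.2.2.1, h.2.2.2.1⟩

theorem of_isCaratheodorySolution (ht : t0 ≤ t1) (hv : Measurable v)
    (hvB : MemLp v ∞ (volume.restrict (Icc t0 t1))) {x₀ : Fin n → ℝ}
    (hx : IsCaratheodorySolution (fun s z => Function.uncurry f (z, v s)) t0 t1 x₀ x)
    (hG : ∀ᵐ t ∂volume.restrict (Icc t0 t1), G (x t) (v t) ≤ 0) : Admissible t0 t1 f G x v :=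
  ⟨hv, exists_ae_norm_le_of_memLp_top hvB, hx.integrableOn,
    fun t h => by rw [hx.apply_left ht]; exact hx.eq_add_integral t h, hG⟩

theorem eventually_constraint_nonpos (h : Admissible t0 t1 f G x v)
    (hG : ContDiff ℝ 1 (Function.uncurry G)) (hd : ContinuousOn d (Icc t0 t1))
    (hu : MemLp u ∞ (volume.restrict (Icc t0 t1))) {y : ℝ → ℝ → (Fin n → ℝ)}
    (hy : HasUniformVariation y x d (𝓟 (Icc t0 t1))) {δ q : ℝ} (hδ : 0 < δ) (hq : 0 < q)
    (hactive : ∀ᵐ t ∂volume.restrict {t ∈ Icc t0 t1 | -δ ≤ G (x t) (v t)},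
      fderiv ℝ (Function.uncurry G) (x t, v t) (d t, u t) ≤ -q) :
    ∀ᶠ ε in 𝓝[>] (0 : ℝ), ∀ᵐ t ∂volume.restrict (Icc t0 t1),
      G (y ε t) (v t + ε • u t) ≤ 0 := by
  have hxv := memLp_top_prodMk_of_continuousOn_Icc h.isCaratheodorySolution.continuousOn h.memLp_top
  have hdu := memLp_top_prodMk_of_continuousOn_Icc hd hu
  obtain ⟨R, hR⟩ := exists_ae_norm_le_of_memLp_top hxv
  obtain ⟨B, hB⟩ := exists_ae_norm_le_of_memLp_top hdu
  have hcomp := (hy.mono (le_principal_iff.2 (ae_restrict_mem measurableSet_Icc))).prodMk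
    (.affine v u _) |>.comp_contDiff hG (isCompact_closedBall 0 R)
      (hR.mono fun s hs => mem_closedBall_zero_iff.2 hs) hB
  obtain ⟨C, hC⟩ := exists_ae_norm_le_of_memLp_top (memLp_top_fderiv_apply hG hxv hdu)
  refine hcomp.eventually_nonpos hδ hq h.2.2.2.2 (hC.mono fun t ht => (le_abs_self _).trans ht) ?_
  filter_upwards [ae_restrict_of_ae (s := Icc t0 t1) (ae_imp_of_ae_restrict hactive),
    ae_restrict_mem measurableSet_Icc] with t hact htI hδt using hact ⟨htI, hδt⟩

theorem isCaratheodorySolution_variationField (h : Admissible t0 t1 f G x v) (ht : t0 ≤ t1)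
    (hf : ContDiff ℝ 1 (Function.uncurry f)) (hu : MemLp u ∞ (volume.restrict (Icc t0 t1)))
    (hd : ∀ t ∈ Icc t0 t1, d t = d₀ + ∫ s in Icc t0 t,
      (fderiv ℝ (fun x' => f x' (v s)) (x s) (d s)
        + fderiv ℝ (fun u' => f (x s) u') (v s) (u s))) :
    IsCaratheodorySolution (variationField (Function.uncurry f) x v u) t0 t1 d₀ d := by
  obtain ⟨K, hK⟩ := exists_isLipschitzField_variationField hf
    h.isCaratheodorySolution.continuousOn h.memLp_top hu
  refine hK.isCaratheodorySolution_of_eq_add_integral ht fun t htI => ?_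
  simpa only [variationField, fderiv_uncurry_apply (hf.differentiable one_ne_zero _)] using hd t htI

theorem exists_hasUniformVariation_eventually_admissible (h : Admissible t0 t1 f G x v)
    (ht : t0 ≤ t1) (hf : ContDiff ℝ 1 (Function.uncurry f)) (hG : ContDiff ℝ 1 (Function.uncurry G))
    (hum : Measurable u) (hu : MemLp u ∞ (volume.restrict (Icc t0 t1)))
    (hd : IsCaratheodorySolution (variationField (Function.uncurry f) x v u) t0 t1 d₀ d)
    {δ q : ℝ} (hδ : 0 < δ) (hq : 0 < q)
    (hactive : ∀ᵐ t ∂volume.restrict {t ∈ Icc t0 t1 | -δ ≤ G (x t) (v t)},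
      fderiv ℝ (Function.uncurry G) (x t, v t) (d t, u t) ≤ -q) :
    ∃ y : ℝ → ℝ → (Fin n → ℝ), HasUniformVariation y x d (𝓟 (Icc t0 t1)) ∧
      ∀ᶠ ε in 𝓝[>] (0 : ℝ), Admissible t0 t1 f G (y ε) (fun t => v t + ε • u t) := by
  obtain ⟨y, hy, hyx⟩ :=
    h.isCaratheodorySolution.exists_hasUniformVariation ht hf h.memLp_top hu hd
  refine ⟨y, hyx, ?_⟩
  filter_upwards [nhdsWithin_le_nhds hy,
    h.eventually_constraint_nonpos hG hd.continuousOn hu hyx hδ hq hactive] with ε hsol hGε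
  exact of_isCaratheodorySolution ht (h.1.add (hum.const_smul ε))
    (h.memLp_top.add (hu.const_smul ε)) hsol hGε

end Admissible

theorem WeakLocalMin.eventually_le {J : (Fin n → ℝ) → (Fin n → ℝ) → ℝ}
    (h : WeakLocalMin t0 t1 J f G x v) {y : ℝ → ℝ → (Fin n → ℝ)}
    (hy : HasUniformVariation y x d (𝓟 (Icc t0 t1))) (hd : ContinuousOn d (Icc t0 t1))
    {w : ℝ → ℝ → (Fin m → ℝ)}
    (hw : HasUniformVariation w v u (ae (volume.restrict (Icc t0 t1))))
    (hu : EssBdd t0 t1 u) :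
    ∀ᶠ ε in 𝓝 (0 : ℝ),
      Admissible t0 t1 f G (y ε) (w ε) → J (x t0) (x t1) ≤ J (y ε t0) (y ε t1) := by
  obtain ⟨-, r, hr, hopt⟩ := h
  obtain ⟨B, hB⟩ := isCompact_Icc.exists_bound_of_continuousOn hd
  obtain ⟨C, hC⟩ := hu
  filter_upwards [hy.eventually_norm_sub_le (eventually_principal.2 hB) hr,
    hw.eventually_norm_sub_le hC hr] with ε hyε hwε hadm
  exact hopt _ _ hadm (eventually_principal.1 hyε) hwε

end Admissible

/-- if `ŵ = (x̂,û)` is a weak local minimum of Problem P, then for any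
`δ > 0` the three approximating cones `Ω₀`, `Ω_δ`, `Ω` in
`X = ℝⁿ × L^∞([t0,t1],ℝ^m) × ℝ` are disjoint: `Ω₀ ∩ Ω_δ ∩ Ω = ∅`.
Here `A` is the operator sending `(x̄0, ū)` to the solution `x̄` of the equation in
variations (given as a hypothesis in integral form), `M_δ = {t : G(ŵ(t)) ≥ -δ}`,
`Ω₀ = {(x0,u,q) : J_{x0}(ξ̂)x0 + J_{x1}(ξ̂)x(t1) + q < 0, x = A(x0,u)}`,
`Ω_δ = {(x0,u,q) : esssup_{M_δ}(G_x(ŵ)x + G_u(ŵ)u) + q < 0, x = A(x0,u)}`,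
(the esssup condition being expressed by an a.e. upper bound `c` with `c + q < 0`), and
`Ω = {(x0,u,q) : q > 0}`. -/
theorem cones_disjoint {n m : ℕ} (t0 t1 : ℝ) (ht : t0 < t1)
    (J : (Fin n → ℝ) → (Fin n → ℝ) → ℝ)
    (f : (Fin n → ℝ) → (Fin m → ℝ) → (Fin n → ℝ))
    (G : (Fin n → ℝ) → (Fin m → ℝ) → ℝ)
    (hJ : ContDiff ℝ 1 (fun q : (Fin n → ℝ) × (Fin n → ℝ) => J q.1 q.2))
    (hf : ContDiff ℝ 1 (fun q : (Fin n → ℝ) × (Fin m → ℝ) => f q.1 q.2))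
    (hG : ContDiff ℝ 1 (fun q : (Fin n → ℝ) × (Fin m → ℝ) => G q.1 q.2))
    (xh : ℝ → (Fin n → ℝ)) (uh : ℝ → (Fin m → ℝ))
    (hmin : WeakLocalMin t0 t1 J f G xh uh)
    -- the operator `A` of the equation in variations, in integral form
    (A : (Fin n → ℝ) → (ℝ → (Fin m → ℝ)) → ℝ → (Fin n → ℝ))
    (hA : ∀ (x0 : Fin n → ℝ) (u : ℝ → (Fin m → ℝ)), Measurable u → EssBdd t0 t1 u →
      ∀ t ∈ Icc t0 t1, A x0 u t = x0 + ∫ s in Icc t0 t,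
        ((fderiv ℝ (fun x' => f x' (uh s)) (xh s)) (A x0 u s)
          + (fderiv ℝ (fun u' => f (xh s) u') (uh s)) (u s)))
    (δ : ℝ) (hδ : 0 < δ) :
    {κ : (Fin n → ℝ) × (ℝ → (Fin m → ℝ)) × ℝ |
        Measurable κ.2.1 ∧ EssBdd t0 t1 κ.2.1 ∧
        (fderiv ℝ (fun a => J a (xh t1)) (xh t0)) κ.1
          + (fderiv ℝ (fun b => J (xh t0) b) (xh t1)) (A κ.1 κ.2.1 t1) + κ.2.2 < 0}
      ∩ {κ : (Fin n → ℝ) × (ℝ → (Fin m → ℝ)) × ℝ |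
        Measurable κ.2.1 ∧ EssBdd t0 t1 κ.2.1 ∧
        ∃ c : ℝ, c + κ.2.2 < 0 ∧
          ∀ᵐ t ∂(volume.restrict {t ∈ Icc t0 t1 | -δ ≤ G (xh t) (uh t)}),
            (fderiv ℝ (fun x' => G x' (uh t)) (xh t)) (A κ.1 κ.2.1 t)
              + (fderiv ℝ (fun u' => G (xh t) u') (uh t)) (κ.2.1 t) ≤ c}
      ∩ {κ : (Fin n → ℝ) × (ℝ → (Fin m → ℝ)) × ℝ | 0 < κ.2.2}
      = ∅ := by
  rw [eq_empty_iff_forall_notMem]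
  rintro ⟨x₀, u, q⟩ ⟨⟨⟨hum, hu, hJneg⟩, -, -, c, hcq, hGc⟩, hq⟩
  simp only [mem_ofPred_eq] at hum hu hJneg hcq hGc hq
  have hd := hmin.1.isCaratheodorySolution_variationField ht.le hf (hu.memLp_top hum)
    (hA x₀ u hum hu)
  have hactive : ∀ᵐ t ∂volume.restrict {t ∈ Icc t0 t1 | -δ ≤ G (xh t) (uh t)},
      fderiv ℝ (Function.uncurry G) (xh t, uh t) (A x₀ u t, u t) ≤ -q := by
    filter_upwards [hGc] with t hGt
    rw [fderiv_uncurry_apply (hG.differentiable one_ne_zero _)]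
    linarith
  obtain ⟨y, hyx, hadm⟩ := hmin.1.exists_hasUniformVariation_eventually_admissible ht.le hf hG hum
    (hu.memLp_top hum) hd hδ hq hactive
  have hJdiff : DifferentiableAt ℝ (Function.uncurry J) (xh t0, xh t1) :=
    hJ.differentiable one_ne_zero _
  have hdecrease : ∀ᶠ ε in 𝓝[>] (0 : ℝ), J (y ε t0) (y ε t1) < J (xh t0) (xh t1) := by
    refine hyx.eventually_apply_pair_lt ((pure_le_principal _).2 (left_mem_Icc.2 ht.le))
      ((pure_le_principal _).2 (right_mem_Icc.2 ht.le)) hJdiff ?_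
    rw [fderiv_uncurry_apply hJdiff, hd.apply_left ht.le]
    linarith
  have hle := hmin.eventually_le hyx hd.continuousOn (.affine uh u _) hu
  obtain ⟨ε, hlt, hadmε, hleε⟩ := (hdecrease.and (hadm.and (nhdsWithin_le_nhds hle))).exists
  exact (hleε hadmε).not_gt hlt
end

section
/- Let a_n ≥ 0 and b_n ≥ 0 be two sequences of functions in L^1([t0,t1],R), and let B_n ⊆ [t0,t1] be measurable sets with mes B_n → 0 such that ∫_{B_n} a_n(t)dt → 1 and ∫_{B_n} b_n(t)dt → 0. Then there exists a sequence of measurable sets E_n ⊆ B_n such that a_n(t) > 0 for a.e. t ∈ E_n, ∫_{E_n} a_n(t)dt → 1, and esssup_{t∈E_n} ( b_n(t)/a_n(t) ) → 0. -/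
open MeasureTheory Set Filter

/-!
Cut `B n` at the level `ω n = √(∫_{B n} b n)`, keeping only the points where `0 < a n` and
`b n / a n ≤ ω n`. On the discarded part `ω n * a n ≤ b n`, so `a n` loses at most
`(ω n)² / ω n = ω n` of its integral, by Chebyshev's argument; both this loss and the bound on the
ratio tend to zero. If `ω n = 0`, then `b n` vanishes a.e. on `B n` and nothing is lost.
-/

section RatioSublevel

variable {α : Type*} {f g : α → ℝ} {w : ℝ} {t : α}

/-- The sublevel set `{g / f ≤ w}` of a ratio within `{0 < f}`, the part of a set that is kept when
the points with large ratio are cut away. The denominator is cleared to avoid division. -/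
def ratioSublevel (f g : α → ℝ) (w : ℝ) : Set α :=
  {t | 0 < f t ∧ g t ≤ w * f t}

theorem mul_le_of_notMem_ratioSublevel (hf : 0 ≤ f t) (hg : 0 ≤ g t)
    (ht : t ∉ ratioSublevel f g w) : w * f t ≤ g t := by
  rcases hf.eq_or_lt with hzero | hpos
  · simpa only [← hzero, mul_zero] using hg
  · exact (not_le.mp fun hle => ht ⟨hpos, hle⟩).le

variable [MeasurableSpace α] {μ : Measure α} {S : Set α}

theorem nullMeasurableSet_ratioSublevel (hf : AEMeasurable f μ) (hg : AEMeasurable g μ) (w : ℝ) :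
    NullMeasurableSet (ratioSublevel f g w) μ :=
  (nullMeasurableSet_lt aemeasurable_const hf).inter (nullMeasurableSet_le hg (hf.const_mul w))

theorem mul_setIntegral_compl_ratioSublevel_le (hf : Integrable f μ) (hg : Integrable g μ)
    (hf0 : 0 ≤ᵐ[μ] f) (hg0 : 0 ≤ᵐ[μ] g) (w : ℝ) :
    w * ∫ t in (ratioSublevel f g w)ᶜ, f t ∂μ ≤ ∫ t, g t ∂μ := by
  have hcompl : NullMeasurableSet (ratioSublevel f g w)ᶜ μ :=
    (nullMeasurableSet_ratioSublevel hf.aemeasurable hg.aemeasurable w).compl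
  calc w * ∫ t in (ratioSublevel f g w)ᶜ, f t ∂μ
      = ∫ t in (ratioSublevel f g w)ᶜ, w * f t ∂μ := (integral_const_mul w f).symm
    _ ≤ ∫ t in (ratioSublevel f g w)ᶜ, g t ∂μ := by
      refine integral_mono_ae (hf.integrableOn.const_mul w) hg.integrableOn ?_
      filter_upwards [ae_restrict_of_ae hf0, ae_restrict_of_ae hg0, ae_restrict_mem₀ hcompl]
        with t hft hgt ht using mul_le_of_notMem_ratioSublevel hft hgt ht
    _ ≤ ∫ t, g t ∂μ := setIntegral_le_integral hg hg0

theorem setIntegral_compl_ratioSublevel_sqrt_le (hf : Integrable f μ) (hg : Integrable g μ)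
    (hf0 : 0 ≤ᵐ[μ] f) (hg0 : 0 ≤ᵐ[μ] g) :
    ∫ t in (ratioSublevel f g √(∫ t, g t ∂μ))ᶜ, f t ∂μ ≤ √(∫ t, g t ∂μ) := by
  rcases (integral_nonneg_of_ae hg0).eq_or_lt with hzero | hpos
  · have hg_zero : g =ᵐ[μ] 0 := (integral_eq_zero_iff_of_nonneg_ae hg0 hg).mp hzero.symm
    rw [← hzero, Real.sqrt_zero]
    have hcompl : NullMeasurableSet (ratioSublevel f g 0)ᶜ μ :=
      (nullMeasurableSet_ratioSublevel hf.aemeasurable hg.aemeasurable 0).compl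
    refine integral_nonpos_of_ae ?_
    filter_upwards [ae_restrict_of_ae hg_zero, ae_restrict_mem₀ hcompl] with t hgt ht
    exact not_lt.mp fun hft => ht ⟨hft, by rw [hgt, zero_mul, Pi.zero_apply]⟩
  · refine le_of_mul_le_mul_left ?_ (Real.sqrt_pos.mpr hpos)
    rw [Real.mul_self_sqrt hpos.le]
    exact mul_setIntegral_compl_ratioSublevel_le hf hg hf0 hg0 _

theorem exists_measurableSet_subset_ratioSublevel_sqrt (hS : NullMeasurableSet S μ)
    (hf : IntegrableOn f S μ) (hg : IntegrableOn g S μ)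
    (hf0 : 0 ≤ᵐ[μ.restrict S] f) (hg0 : 0 ≤ᵐ[μ.restrict S] g) :
    ∃ E ⊆ S, MeasurableSet E ∧ E ⊆ ratioSublevel f g √(∫ t in S, g t ∂μ) ∧
      ∫ t in S, f t ∂μ - √(∫ t in S, g t ∂μ) ≤ ∫ t in E, f t ∂μ := by
  set A := ratioSublevel f g √(∫ t in S, g t ∂μ)
  have hA : NullMeasurableSet A (μ.restrict S) :=
    nullMeasurableSet_ratioSublevel hf.aemeasurable hg.aemeasurable _
  obtain ⟨E, hE_sub, hE, hE_ae⟩ :=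
    ((nullMeasurableSet_restrict hS).mp hA).exists_measurable_subset_ae_eq
  refine ⟨E, hE_sub.trans inter_subset_right, hE, hE_sub.trans inter_subset_left, ?_⟩
  have hloss : ∫ t in Aᶜ, f t ∂μ.restrict S ≤ √(∫ t in S, g t ∂μ) :=
    setIntegral_compl_ratioSublevel_sqrt_le hf hg hf0 hg0
  rw [setIntegral_congr_set hE_ae, ← Measure.restrict_restrict₀ hA, sub_le_iff_le_add,
    ← integral_add_compl₀ hA hf]
  gcongr

end RatioSublevel

theorem cut_lemma_general {α ι : Type*} [MeasurableSpace α] {μ : Measure α} {l : Filter ι}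
    {a b : ι → α → ℝ} {B : ι → Set α} {c : ℝ}
    (hB : ∀ k, NullMeasurableSet (B k) μ)
    (ha_int : ∀ k, IntegrableOn (a k) (B k) μ) (hb_int : ∀ k, IntegrableOn (b k) (B k) μ)
    (ha_nonneg : ∀ k, 0 ≤ᵐ[μ.restrict (B k)] a k) (hb_nonneg : ∀ k, 0 ≤ᵐ[μ.restrict (B k)] b k)
    (haB : Tendsto (fun k => ∫ t in B k, a k t ∂μ) l (nhds c))
    (hbB : Tendsto (fun k => ∫ t in B k, b k t ∂μ) l (nhds 0)) :
    ∃ E : ι → Set α,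
      (∀ k, MeasurableSet (E k) ∧ E k ⊆ B k) ∧
      (∀ k, ∀ t ∈ E k, 0 < a k t) ∧
      Tendsto (fun k => ∫ t in E k, a k t ∂μ) l (nhds c) ∧
      ∃ ω : ι → ℝ, Tendsto ω l (nhds 0) ∧ ∀ k, ∀ t ∈ E k, b k t ≤ ω k * a k t := by
  choose E hEB hE hE_ratio hE_lower using fun k =>
    exists_measurableSet_subset_ratioSublevel_sqrt (hB k) (ha_int k) (hb_int k)
      (ha_nonneg k) (hb_nonneg k)
  have hE_upper (k : ι) : ∫ t in E k, a k t ∂μ ≤ ∫ t in B k, a k t ∂μ :=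
    setIntegral_mono_set (ha_int k) (ha_nonneg k) (hEB k).eventuallyLE
  have hω : Tendsto (fun k => √(∫ t in B k, b k t ∂μ)) l (nhds 0) := by
    simpa only [Real.sqrt_zero] using hbB.sqrt
  have hlower : Tendsto (fun k => ∫ t in B k, a k t ∂μ - √(∫ t in B k, b k t ∂μ)) l (nhds c) := by
    simpa only [sub_zero] using haB.sub hω
  exact ⟨E, fun k => ⟨hE k, hEB k⟩, fun k t ht => (hE_ratio k ht).1,
    tendsto_of_tendsto_of_tendsto_of_le_of_le hlower haB hE_lower hE_upper,
    _, hω, fun k t ht => (hE_ratio k ht).2⟩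

/-- Lemma cut2: given `a_n ≥ 0`, `b_n ≥ 0` in `L¹([t0,t1],ℝ)` and
measurable sets `B_n ⊆ [t0,t1]` with `mes B_n → 0`, `∫_{B_n} a_n → 1`, `∫_{B_n} b_n → 0`,
there are measurable sets `E_n ⊆ B_n` with `a_n > 0` a.e. on `E_n`, `∫_{E_n} a_n → 1`,
and `esssup_{E_n} (b_n / a_n) → 0` (expressed by a sequence `ω_n → 0` with
`b_n ≤ ω_n · a_n` a.e. on `E_n`). -/
theorem cut_lemma (t0 t1 : ℝ) (a b : ℕ → ℝ → ℝ) (B : ℕ → Set ℝ)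
    (hB : ∀ k, MeasurableSet (B k) ∧ B k ⊆ Icc t0 t1)
    (ha_int : ∀ k, IntegrableOn (a k) (Icc t0 t1))
    (hb_int : ∀ k, IntegrableOn (b k) (Icc t0 t1))
    (ha_nonneg : ∀ k, ∀ᵐ t ∂(volume.restrict (Icc t0 t1)), 0 ≤ a k t)
    (hb_nonneg : ∀ k, ∀ᵐ t ∂(volume.restrict (Icc t0 t1)), 0 ≤ b k t)
    (hBmes : Tendsto (fun k => (volume (B k)).toReal) atTop (nhds 0))
    (haB : Tendsto (fun k => ∫ t in B k, a k t) atTop (nhds 1))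
    (hbB : Tendsto (fun k => ∫ t in B k, b k t) atTop (nhds 0)) :
    ∃ E : ℕ → Set ℝ,
      (∀ k, MeasurableSet (E k) ∧ E k ⊆ B k) ∧
      (∀ k, ∀ᵐ t ∂(volume.restrict (E k)), 0 < a k t) ∧
      Tendsto (fun k => ∫ t in E k, a k t) atTop (nhds 1) ∧
      ∃ ω : ℕ → ℝ, Tendsto ω atTop (nhds 0) ∧
        ∀ k, ∀ᵐ t ∂(volume.restrict (E k)), b k t ≤ ω k * a k t := by
  obtain ⟨E, hE, ha_pos, haE, ω, hω, hratio⟩ := cut_lemma_general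
    (fun k => (hB k).1.nullMeasurableSet)
    (fun k => (ha_int k).mono_set (hB k).2) (fun k => (hb_int k).mono_set (hB k).2)
    (fun k => ae_restrict_of_ae_restrict_of_subset (hB k).2 (ha_nonneg k))
    (fun k => ae_restrict_of_ae_restrict_of_subset (hB k).2 (hb_nonneg k)) haB hbB
  exact ⟨E, hE, fun k => ae_restrict_of_forall_mem (hE k).1 (ha_pos k), haE, ω, hω,
    fun k => ae_restrict_of_forall_mem (hE k).1 (hratio k)⟩
end

section
/- Let x̂ ∈ C([t0,t1],R^n), û ∈ L^∞([t0,t1],R^m), and let G:R^{n+m}→R be continuously differentiable. Suppose there are measurable sets E^k ⊆ [t0,t1] with mes E^k → 0, nonnegative functions λ^k ∈ L^1([t0,t1],R) with λ^k = 0 a.e. outside E^k, and positive numbers δ^k → 0, ε^k → 0 such that, for each k, −δ^k ≤ G(x̂(t),û(t)) ≤ 0 and |G_u(x̂(t),û(t))| ≤ ε^k for a.e. t ∈ E^k. Assume the measures λ^k(t)dt converge weakly-* (as continuous linear functionals on C([t0,t1],R)) to a nonzero nonnegative finite Borel measure η̂, and the vector measures λ^k(t)G_x(x̂(t),û(t))dt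 converge weakly-* to a finite R^{n*}-valued Borel measure μ̂_B. Then there exists an η̂-measurable, essentially bounded function ŝ:[t0,t1]→R^{n*} such that μ̂_B = ŝ·η̂ (i.e., μ̂_B(B) = ∫_B ŝ dη̂ for all Borel B) and ŝ(t) ∈ conv S(x̂(t), clm(û)(t)) for η̂-almost every t; in particular, η̂-almost every t belongs to D. -/
open MeasureTheory Set Filter

/-- The set-valued map `t ↦ clm(û)(t)`. -/
def clmAt (t0 t1 : ℝ) {m : ℕ} (u : ℝ → (Fin m → ℝ)) (t : ℝ) : Set (Fin m → ℝ) :=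
  {v | (t, v) ∈ clmSet t0 t1 u}

/-- `S(x, U) = ⋃_{v ∈ U} S(x,v)`, where `S(x,v) = {G_x(x,v)}` if `(x,v)` is a phase point
of `G` and `∅` otherwise; the values are row vectors, i.e. functionals on `ℝⁿ`. -/
def Sset {n m : ℕ} (G : (Fin n → ℝ) → (Fin m → ℝ) → ℝ)
    (x : Fin n → ℝ) (U : Set (Fin m → ℝ)) : Set ((Fin n → ℝ) →L[ℝ] ℝ) :=
  {r | ∃ v ∈ U, G x v = 0 ∧ fderiv ℝ (fun u' => G x u') v = 0 ∧
      r = fderiv ℝ (fun x' => G x' v) x}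

/-- The set `D` of times `t ∈ [t0,t1]` with `({x̂(t)} × clm(û)(t)) ∩ N(G) ≠ ∅`. -/
def Dset (t0 t1 : ℝ) {n m : ℕ} (G : (Fin n → ℝ) → (Fin m → ℝ) → ℝ)
    (xh : ℝ → (Fin n → ℝ)) (uh : ℝ → (Fin m → ℝ)) : Set ℝ :=
  {t | t ∈ Icc t0 t1 ∧ ∃ v ∈ clmAt t0 t1 uh t,
      G (xh t) v = 0 ∧ fderiv ℝ (fun u' => G (xh t) u') v = 0}

/-!
Push `λ^k dt` forward to the graph of `û`. These measures live on one compact set and have bounded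
mass, so they converge weakly, along an ultrafilter, to a measure `ν` whose first marginal is `η̂`.
The function `|G| + ‖G_u‖` has integral at most `δ^k + ε^k` times the mass of `λ^k`, so its
`ν`-integral vanishes and `ν` lives on the phase points of `G` in the support of the graph.
Disintegrating `ν` over `η̂`, the density `ŝ(t)` is the mean of `G_x(x̂(t), ·)` with respect to the
fibre measure at `t`, hence lies in the convex hull of the values of `G_x` on the fibre.
-/

open scoped BoundedContinuousFunction

section CompactSupport

variable {Y V : Type*} [TopologicalSpace Y] [T2Space Y] {K : Set Y}
  [NormedAddCommGroup V]

theorem exists_boundedContinuousFunction_eqOn [NormalSpace Y] (hK : IsCompact K) {g : Y → ℝ}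
    (hg : ContinuousOn g K) : ∃ g' : Y →ᵇ ℝ, EqOn g' g K := by
  have := isCompact_iff_compactSpace.1 hK
  obtain ⟨g', -, hg'⟩ := BoundedContinuousFunction.exists_norm_eq_domRestrict_eq_of_closed
    (.mkOfCompact ⟨K.domRestrict g, hg.domRestrict⟩) hK.isClosed
  exact ⟨g', fun y hy => DFunLike.congr_fun hg' ⟨y, hy⟩⟩

variable [MeasurableSpace Y] [BorelSpace Y]

theorem integrable_of_continuousOn_of_ae_mem {ν : Measure Y} [IsFiniteMeasure ν]
    (hK : IsCompact K) (hνK : ∀ᵐ y ∂ν, y ∈ K) {g : Y → V} (hg : ContinuousOn g K) :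
    Integrable g ν := by
  simpa [IntegrableOn, Measure.restrict_eq_self_of_ae_mem hνK] using
    hg.integrableOn_compact (μ := ν) hK

theorem exists_tendsto_integral_of_isCompact [NormalSpace Y] (hK : IsCompact K) {ι : Type*}
    {l : Filter ι} [l.NeBot] {ν : ι → Measure Y} [hν : ∀ k, IsFiniteMeasure (ν k)]
    (hνK : ∀ k, ∀ᵐ y ∂ν k, y ∈ K) {C : ℝ} (hC : ∀ᶠ k in l, (ν k).real univ ≤ C) :
    ∃ (ν' : Measure Y) (f : Ultrafilter ι), IsFiniteMeasure ν' ∧ ↑f ≤ l ∧ (∀ᵐ y ∂ν', y ∈ K) ∧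
      ∀ g : Y → ℝ, ContinuousOn g K →
        Tendsto (fun k => ∫ y, g y ∂ν k) f (nhds (∫ y, g y ∂ν')) := by
  let N : ι → FiniteMeasure Y := fun k => ⟨ν k, hν k⟩
  let f := Ultrafilter.of l
  have hNf : ∀ᶠ k in (f : Filter ι), (N k).mass ≤ C.toNNReal ∧ N k Kᶜ = 0 :=
    (hC.filter_mono (Ultrafilter.of_le l)).mono fun k hk =>
      ⟨NNReal.le_toNNReal_of_coe_le hk, (FiniteMeasure.null_iff_toMeasure_null _ _).2 (hνK k)⟩
  obtain ⟨ν', ⟨-, hν'K⟩, hlim⟩ :=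
    (isCompact_setOfPred_finiteMeasure_le_of_isCompact C.toNNReal hK).ultrafilter_le_nhds'
      (f.map N) hNf
  have hν'K : ∀ᵐ y ∂(ν' : Measure Y), y ∈ K := (FiniteMeasure.null_iff_toMeasure_null ν' _).1 hν'K
  refine ⟨ν', f, inferInstance, Ultrafilter.of_le l, hν'K, fun g hg => ?_⟩
  obtain ⟨g', hg'⟩ := exists_boundedContinuousFunction_eqOn hK hg
  have hint : ∀ {ρ : Measure Y}, (∀ᵐ y ∂ρ, y ∈ K) → ∫ y, g' y ∂ρ = ∫ y, g y ∂ρ := fun hρ =>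
    integral_congr_ae (hρ.mono hg')
  have hlim' := FiniteMeasure.tendsto_iff_forall_integral_tendsto.1
    (show Tendsto N f (nhds ν') from hlim) g'
  rw [hint hν'K] at hlim'
  exact hlim'.congr fun k => hint (hνK k)

variable [NormedSpace ℝ V]

theorem eq_integral_of_tendsto_integral (hK : IsCompact K) {ι : Type*} {l : Filter ι} [l.NeBot]
    {ν : ι → Measure Y} [∀ k, IsFiniteMeasure (ν k)] (hνK : ∀ k, ∀ᵐ y ∂ν k, y ∈ K)
    {ν' : Measure Y} [IsFiniteMeasure ν'] (hν'K : ∀ᵐ y ∂ν', y ∈ K)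
    (hlim : ∀ g : Y → ℝ, ContinuousOn g K →
      Tendsto (fun k => ∫ y, g y ∂ν k) l (nhds (∫ y, g y ∂ν')))
    [CompleteSpace V] {g : Y → V} (hg : ContinuousOn g K) {L : V}
    (hL : Tendsto (fun k => ∫ y, g y ∂ν k) l (nhds L)) :
    L = ∫ y, g y ∂ν' := by
  refine (SeparatingDual.eq_iff_forall_dual_eq (R := ℝ)).2 fun e => ?_
  have hcomm : ∀ {ρ : Measure Y} [IsFiniteMeasure ρ], (∀ᵐ y ∂ρ, y ∈ K) →
      ∫ y, e (g y) ∂ρ = e (∫ y, g y ∂ρ) := fun hρ =>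
    e.integral_comp_comm (integrable_of_continuousOn_of_ae_mem hK hρ hg)
  rw [← hcomm hν'K]
  exact tendsto_nhds_unique ((e.continuous.tendsto L).comp hL)
    ((hlim _ (e.continuous.comp_continuousOn hg)).congr fun k => hcomm (hνK k))

end CompactSupport

section ConvexHull

variable {V : Type*} [NormedAddCommGroup V] [NormedSpace ℝ V] [FiniteDimensional ℝ V]

theorem convexHull_eq_iUnion_image_stdSimplex (s : Set V) :
    convexHull ℝ s = ⋃ k ∈ Iic (Module.finrank ℝ V + 1),
      (fun p : (Fin k → ℝ) × (Fin k → V) => ∑ i, p.1 i • p.2 i) ''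
        (stdSimplex ℝ (Fin k) ×ˢ univ.pi fun _ => s) := by
  apply Subset.antisymm
  · intro x hx
    obtain ⟨ι, _, z, w, hz, hind, hw, hw1, rfl⟩ := eq_pos_convex_span_of_mem_convexHull hx
    let e := (Fintype.equivFin ι).symm
    refine mem_biUnion (x := Fintype.card ι)
      (hind.card_le_finrank_succ.trans (Nat.succ_le_succ (Submodule.finrank_le _)))
      ⟨(w ∘ e, z ∘ e), ⟨⟨fun i => (hw _).le, ?_⟩, fun i _ => hz (mem_range_self _)⟩, ?_⟩
    · exact (e.sum_comp w).trans hw1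
    · exact e.sum_comp fun i => w i • z i
  · refine iUnion₂_subset fun k _ => ?_
    rintro _ ⟨⟨w, z⟩, ⟨hw, hz⟩, rfl⟩
    exact (convex_convexHull ℝ s).sum_mem (fun i _ => hw.1 i) hw.2
      fun i _ => subset_convexHull ℝ s (hz i (mem_univ i))

theorem isCompact_convexHull_of_finiteDimensional {s : Set V} (hs : IsCompact s) :
    IsCompact (convexHull ℝ s) := by
  rw [convexHull_eq_iUnion_image_stdSimplex]
  exact (finite_Iic _).isCompact_biUnion fun k _ =>
    ((isCompact_stdSimplex ℝ (Fin k)).prod (isCompact_univ_pi fun _ => hs)).image (by fun_prop)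

theorem integral_mem_convexHull_image {Y : Type*} [TopologicalSpace Y] [T2Space Y]
    [MeasurableSpace Y] [BorelSpace Y] {ρ : Measure Y}
    [IsProbabilityMeasure ρ] {K : Set Y} (hK : IsCompact K) (hρK : ∀ᵐ y ∂ρ, y ∈ K) {g : Y → V}
    (hg : ContinuousOn g K) : ∫ y, g y ∂ρ ∈ convexHull ℝ (g '' K) :=
  (convex_convexHull ℝ _).integral_mem
    (isCompact_convexHull_of_finiteDimensional (hK.image_of_continuousOn hg)).isClosed
    (hρK.mono fun _ hy => subset_convexHull ℝ _ (mem_image_of_mem g hy))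
    (integrable_of_continuousOn_of_ae_mem hK hρK hg)

end ConvexHull

section Disintegration

variable {T W V : Type*} [TopologicalSpace T] [TopologicalSpace.MetrizableSpace T]
  [SecondCountableTopology T] [MeasurableSpace T] [BorelSpace T]
  [TopologicalSpace W] [PolishSpace W] [Nonempty W] [MeasurableSpace W] [BorelSpace W]
  [NormedAddCommGroup V] [NormedSpace ℝ V] [FiniteDimensional ℝ V]

theorem exists_density_mem_convexHull {ν : Measure (T × W)} [IsFiniteMeasure ν] {Z : Set (T × W)}
    (hZ : IsCompact Z) (hνZ : ∀ᵐ y ∂ν, y ∈ Z) {g : T × W → V} (hg : ContinuousOn g Z) :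
    ∃ s : T → V, AEStronglyMeasurable s ν.fst ∧ (∃ C : ℝ, ∀ᵐ t ∂ν.fst, ‖s t‖ ≤ C) ∧
      (∀ φ : T → ℝ, Continuous φ → ∫ t, φ t • s t ∂ν.fst = ∫ y, φ y.1 • g y ∂ν) ∧
      ∀ᵐ t ∂ν.fst, s t ∈ convexHull ℝ ((fun v => g (t, v)) '' (Prod.mk t ⁻¹' Z)) := by
  have hfib : ∀ᵐ t ∂ν.fst, ∀ᵐ v ∂ν.condKernel t, (t, v) ∈ Z := by
    rw [← ν.disintegrate ν.condKernel] at hνZ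
    exact Measure.ae_ae_of_ae_compProd hνZ
  obtain ⟨C, hC⟩ := hZ.exists_bound_of_continuousOn hg
  have hmeas := (integrable_of_continuousOn_of_ae_mem hZ hνZ hg).aestronglyMeasurable
  refine ⟨fun t => ∫ v, g (t, v) ∂ν.condKernel t, hmeas.integral_condKernel, ⟨C, ?_⟩,
    fun φ hφ => ?_, ?_⟩
  · filter_upwards [hfib] with t ht
    simpa using norm_integral_le_of_norm_le_const (ht.mono fun v hv => hC _ hv)
  · simp_rw [← integral_smul]
    exact Measure.integral_condKernel (f := fun y => φ y.1 • g y) <|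
      integrable_of_continuousOn_of_ae_mem hZ hνZ <|
        (hφ.comp continuous_fst).continuousOn.smul hg
  · filter_upwards [hfib] with t ht
    have hslice : IsCompact (Prod.mk t ⁻¹' Z) :=
      (hZ.image continuous_snd).of_isClosed_subset (hZ.isClosed.preimage (by fun_prop))
        fun v hv => ⟨(t, v), hv, rfl⟩
    exact integral_mem_convexHull_image hslice ht (hg.comp (by fun_prop) fun _ hv => hv)

theorem exists_density_of_tendsto_integral {ι : Type*} {l : Filter ι} [l.NeBot]
    {ν : ι → Measure (T × W)} [∀ k, IsFiniteMeasure (ν k)] {K : Set (T × W)} (hK : IsCompact K)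
    (hνK : ∀ k, ∀ᵐ y ∂ν k, y ∈ K) {η : Measure T} [IsFiniteMeasure η]
    (hη : ∀ φ : T → ℝ, Continuous φ →
      Tendsto (fun k => ∫ y, φ y.1 ∂ν k) l (nhds (∫ t, φ t ∂η)))
    {h : T × W → ℝ} (hh : ContinuousOn h K) (hh0 : 0 ≤ h)
    (hhlim : Tendsto (fun k => ∫ y, h y ∂ν k) l (nhds 0))
    {g : T × W → V} (hg : ContinuousOn g K)
    (hglim : ∀ φ : T → ℝ, Continuous φ →
      ∃ L, Tendsto (fun k => ∫ y, φ y.1 • g y ∂ν k) l (nhds L)) :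
    ∃ s : T → V, AEStronglyMeasurable s η ∧ (∃ C : ℝ, ∀ᵐ t ∂η, ‖s t‖ ≤ C) ∧
      (∀ φ : T → ℝ, Continuous φ →
        Tendsto (fun k => ∫ y, φ y.1 • g y ∂ν k) l (nhds (∫ t, φ t • s t ∂η))) ∧
      ∀ᵐ t ∂η, s t ∈ convexHull ℝ ((fun v => g (t, v)) '' {v | (t, v) ∈ K ∧ h (t, v) = 0}) := by
  have hmass : Tendsto (fun k => (ν k).real univ) l (nhds (η.real univ)) := by
    simpa using hη (fun _ => 1) continuous_const
  obtain ⟨ν', f, _, hfl, hν'K, hlim⟩ := exists_tendsto_integral_of_isCompact hK hνK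
    (hmass.eventually_le_const (lt_add_one _))
  have hfst : ν'.fst = η := ext_of_forall_integral_eq_of_IsFiniteMeasure fun φ => by
    rw [Measure.fst, integral_map measurable_fst.aemeasurable φ.continuous.aestronglyMeasurable]
    exact tendsto_nhds_unique (hlim _ (φ.continuous.comp continuous_fst).continuousOn)
      ((hη φ φ.continuous).mono_left hfl)
  have hν'h : ∀ᵐ y ∂ν', h y = 0 :=
    (integral_eq_zero_iff_of_nonneg hh0 (integrable_of_continuousOn_of_ae_mem hK hν'K hh)).1
      (tendsto_nhds_unique (hlim h hh) (hhlim.mono_left hfl))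
  have hZ : IsCompact (K ∩ h ⁻¹' {0}) :=
    hK.of_isClosed_subset (hh.preimage_isClosed_of_isClosed hK.isClosed isClosed_singleton)
      inter_subset_left
  obtain ⟨s, hs_meas, hs_bdd, hs_int, hs_mem⟩ := exists_density_mem_convexHull hZ
    (hν'K.and hν'h) (hg.mono inter_subset_left)
  rw [hfst] at hs_meas hs_bdd hs_int hs_mem
  refine ⟨s, hs_meas, hs_bdd, fun φ hφ => ?_, hs_mem⟩
  obtain ⟨L, hL⟩ := hglim φ hφ
  have := FiniteDimensional.complete ℝ V
  have hLs : L = ∫ y, φ y.1 • g y ∂ν' := eq_integral_of_tendsto_integral hK hνK hν'K hlim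
    ((hφ.comp continuous_fst).continuousOn.smul hg) (hL.mono_left hfl)
  rwa [hs_int φ hφ, ← hLs]

end Disintegration

section GraphMeasure

variable {T U : Type*} [MeasurableSpace T] [MeasurableSpace U]

/-- The image of the measure `lam dτ` on the graph of `u`; negative values of `lam` are cut off
at `0`. -/
noncomputable def graphMeasure (τ : Measure T) (u : T → U) (lam : T → ℝ) : Measure (T × U) :=
  (τ.withDensity fun t => ENNReal.ofReal (lam t)).map fun t => (t, u t)

variable {τ : Measure T} {u : T → U} {lam : T → ℝ}

theorem isFiniteMeasure_graphMeasure (hlam : Integrable lam τ) :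
    IsFiniteMeasure (graphMeasure τ u lam) := by
  have := isFiniteMeasure_withDensity_ofReal hlam.2
  unfold graphMeasure
  infer_instance

theorem ae_mem_graphMeasure (hu : AEMeasurable u τ) {K : Set (T × U)} (hK : MeasurableSet K)
    (huK : ∀ᵐ t ∂τ, (t, u t) ∈ K) : ∀ᵐ y ∂graphMeasure τ u lam, y ∈ K :=
  have hac : τ.withDensity (fun t => ENNReal.ofReal (lam t)) ≪ τ :=
    withDensity_absolutelyContinuous _ _
  (ae_map_iff ((aemeasurable_id.prodMk hu).mono_ac hac) hK).2 (hac.ae_le huK)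

theorem integral_graphMeasure (hu : AEMeasurable u τ) (hlam : Integrable lam τ)
    (hlam0 : ∀ᵐ t ∂τ, 0 ≤ lam t) {V : Type*} [NormedAddCommGroup V] [NormedSpace ℝ V]
    {g : T × U → V} (hg : AEStronglyMeasurable g (graphMeasure τ u lam)) :
    ∫ y, g y ∂graphMeasure τ u lam = ∫ t, lam t • g (t, u t) ∂τ := by
  have hgraph : AEMeasurable (fun t => (t, u t))
      (τ.withDensity fun t => ENNReal.ofReal (lam t)) :=
    (aemeasurable_id.prodMk hu).mono_ac (withDensity_absolutelyContinuous _ _)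
  rw [graphMeasure, integral_map hgraph hg, integral_withDensity_eq_integral_toReal_smul₀
    hlam.aemeasurable.ennreal_ofReal (by simp)]
  refine integral_congr_ae ?_
  filter_upwards [hlam0] with t h0
  rw [ENNReal.toReal_ofReal h0]

end GraphMeasure

theorem exists_density_of_tendsto_integral_graph {T U V ι : Type*} [TopologicalSpace T]
    [TopologicalSpace.MetrizableSpace T] [SecondCountableTopology T] [MeasurableSpace T]
    [BorelSpace T] [TopologicalSpace U] [PolishSpace U] [Nonempty U] [MeasurableSpace U]
    [BorelSpace U] [NormedAddCommGroup V] [NormedSpace ℝ V] [FiniteDimensional ℝ V]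
    {τ : Measure T} {u : T → U} (hu : AEMeasurable u τ) {K : Set (T × U)} (hK : IsCompact K)
    (huK : ∀ᵐ t ∂τ, (t, u t) ∈ K) {l : Filter ι} [l.NeBot] {lam : ι → T → ℝ}
    (hlam : ∀ k, Integrable (lam k) τ) (hlam0 : ∀ k, ∀ᵐ t ∂τ, 0 ≤ lam k t)
    {η : Measure T} [IsFiniteMeasure η]
    (hη : ∀ φ : T → ℝ, Continuous φ →
      Tendsto (fun k => ∫ t, lam k t * φ t ∂τ) l (nhds (∫ t, φ t ∂η)))
    {h : T × U → ℝ} (hh : ContinuousOn h K) (hh0 : 0 ≤ h)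
    (hhlim : Tendsto (fun k => ∫ t, lam k t * h (t, u t) ∂τ) l (nhds 0))
    {g : T × U → V} (hg : ContinuousOn g K)
    (hglim : ∀ φ : T → ℝ, Continuous φ →
      ∃ L, Tendsto (fun k => ∫ t, (lam k t * φ t) • g (t, u t) ∂τ) l (nhds L)) :
    ∃ s : T → V, AEStronglyMeasurable s η ∧ (∃ C : ℝ, ∀ᵐ t ∂η, ‖s t‖ ≤ C) ∧
      (∀ φ : T → ℝ, Continuous φ →
        Tendsto (fun k => ∫ t, (lam k t * φ t) • g (t, u t) ∂τ) l (nhds (∫ t, φ t • s t ∂η))) ∧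
      ∀ᵐ t ∂η, s t ∈ convexHull ℝ ((fun v => g (t, v)) '' {v | (t, v) ∈ K ∧ h (t, v) = 0}) := by
  have := fun k => isFiniteMeasure_graphMeasure (u := u) (hlam k)
  have hνK : ∀ k, ∀ᵐ y ∂graphMeasure τ u (lam k), y ∈ K := fun k =>
    ae_mem_graphMeasure hu hK.measurableSet huK
  have hmeas : ∀ k, AEStronglyMeasurable g (graphMeasure τ u (lam k)) := fun k =>
    (integrable_of_continuousOn_of_ae_mem hK (hνK k) hg).aestronglyMeasurable
  have hint : ∀ k {f : T × U → ℝ}, ContinuousOn f K →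
      ∫ y, f y ∂graphMeasure τ u (lam k) = ∫ t, lam k t * f (t, u t) ∂τ := fun k _ hf =>
    integral_graphMeasure hu (hlam k) (hlam0 k)
      (integrable_of_continuousOn_of_ae_mem hK (hνK k) hf).aestronglyMeasurable
  have hint_smul : ∀ {φ : T → ℝ}, Continuous φ → ∀ k,
      ∫ y, φ y.1 • g y ∂graphMeasure τ u (lam k) = ∫ t, (lam k t * φ t) • g (t, u t) ∂τ :=
    fun hφ k => by
      simp_rw [mul_smul]
      exact integral_graphMeasure hu (hlam k) (hlam0 k)
        ((hφ.comp continuous_fst).aestronglyMeasurable.smul (hmeas k))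
  obtain ⟨s, hs_meas, hs_bdd, hs_lim, hs_mem⟩ := exists_density_of_tendsto_integral hK hνK
    (fun φ hφ => (hη φ hφ).congr fun k => (hint k (hφ.comp continuous_fst).continuousOn).symm)
    hh hh0 (hhlim.congr fun k => (hint k hh).symm) hg
    fun φ hφ => (hglim φ hφ).imp fun _ hL => hL.congr fun k => (hint_smul hφ k).symm
  exact ⟨s, hs_meas, hs_bdd, fun φ hφ => (hs_lim φ hφ).congr (hint_smul hφ), hs_mem⟩

section PhasePoints

variable {X U : Type*} [NormedAddCommGroup U] [NormedSpace ℝ U]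

/-- The defect `|G(x,v)| + ‖G_v(x,v)‖`, which vanishes exactly at the phase points of `G`. -/
noncomputable def phaseDefect (G : X → U → ℝ) (x : X) (v : U) : ℝ :=
  |G x v| + ‖fderiv ℝ (fun u' => G x u') v‖

variable {G : X → U → ℝ}

theorem phaseDefect_nonneg (x : X) (v : U) : 0 ≤ phaseDefect G x v := by
  unfold phaseDefect
  positivity

theorem phaseDefect_eq_zero_iff {x : X} {v : U} :
    phaseDefect G x v = 0 ↔ G x v = 0 ∧ fderiv ℝ (fun u' => G x u') v = 0 := by
  rw [phaseDefect, add_eq_zero_iff_of_nonneg (abs_nonneg _) (norm_nonneg _), abs_eq_zero,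
    norm_eq_zero]

theorem norm_phaseDefect_le {x : X} {v : U} {δ ε : ℝ} (hδ : -δ ≤ G x v) (h0 : G x v ≤ 0)
    (hε : ‖fderiv ℝ (fun u' => G x u') v‖ ≤ ε) : ‖phaseDefect G x v‖ ≤ δ + ε := by
  rw [Real.norm_of_nonneg (phaseDefect_nonneg x v)]
  exact add_le_add (abs_le.2 ⟨hδ, by linarith⟩) hε

/-- The points `v` of the closure of `u` at time `t` with respect to the measure `τ` for which
`(x t, v)` is a phase point of `G`. The graph of that closure is encoded as the support of the image
of `τ` on the graph of `u`. -/
def phaseSlice {T : Type*} [TopologicalSpace T] [MeasurableSpace T] [MeasurableSpace U]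
    (τ : Measure T) (G : X → U → ℝ) (x : T → X) (u : T → U) (t : T) : Set U :=
  {v | (t, v) ∈ (τ.map fun t => (t, u t)).support ∧ G (x t) v = 0 ∧
    fderiv ℝ (fun u' => G (x t) u') v = 0}

variable [NormedAddCommGroup X] [NormedSpace ℝ X]

theorem continuous_fderiv_left (hG : ContDiff ℝ 1 fun q : X × U => G q.1 q.2) :
    Continuous fun q : X × U => fderiv ℝ (fun x => G x q.2) q.1 :=
  Continuous.fderiv_one (f := fun (q : X × U) x => G x q.2)
    (hG.comp (contDiff_snd.prodMk contDiff_fst.snd)) continuous_fst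

theorem continuous_phaseDefect (hG : ContDiff ℝ 1 fun q : X × U => G q.1 q.2) :
    Continuous fun q : X × U => phaseDefect G q.1 q.2 :=
  hG.continuous.abs.add <| .norm <| Continuous.fderiv_one (f := fun (q : X × U) v => G q.1 v)
    (hG.comp (contDiff_fst.fst.prodMk contDiff_snd)) continuous_snd

end PhasePoints

theorem tendsto_setIntegral_mul_zero {α ι : Type*} [MeasurableSpace α] {σ : Measure α} {I : Set α}
    {l : Filter ι} {f : ι → α → ℝ} {h : α → ℝ} {E : ι → Set α} {c : ι → ℝ} {A : ℝ}
    (hf : ∀ k, IntegrableOn (f k) I σ) (hf0 : ∀ k, ∀ᵐ t ∂σ.restrict I, 0 ≤ f k t)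
    (hfA : Tendsto (fun k => ∫ t in I, f k t ∂σ) l (nhds A)) (hE : ∀ k, MeasurableSet (E k))
    (hfE : ∀ k, ∀ᵐ t ∂σ.restrict I, t ∉ E k → f k t = 0)
    (hh : ∀ k, ∀ᵐ t ∂σ.restrict (E k), ‖h t‖ ≤ c k) (hc : Tendsto c l (nhds 0)) :
    Tendsto (fun k => ∫ t in I, f k t * h t ∂σ) l (nhds 0) := by
  have hbound : ∀ k, ∀ᵐ t ∂σ.restrict I, ‖f k t * h t‖ ≤ f k t * c k := fun k => by
    filter_upwards [hf0 k, hfE k, ae_restrict_of_ae ((ae_restrict_iff' (hE k)).1 (hh k))]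
      with t h0 hoff hon
    by_cases htE : t ∈ E k
    · rw [norm_mul, Real.norm_of_nonneg h0]
      exact mul_le_mul_of_nonneg_left (hon htE) h0
    · simp [hoff htE]
  refine squeeze_zero_norm (fun k => ?_) (by simpa using hfA.mul hc)
  rw [← integral_mul_const]
  exact norm_integral_le_of_norm_le ((hf k).mul_const _) (hbound k)

theorem singular_part_representation_general {T X U ι : Type*} [TopologicalSpace T]
    [TopologicalSpace.MetrizableSpace T] [SecondCountableTopology T] [MeasurableSpace T]
    [BorelSpace T] [NormedAddCommGroup X] [NormedSpace ℝ X] [FiniteDimensional ℝ X]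
    [NormedAddCommGroup U] [NormedSpace ℝ U] [FiniteDimensional ℝ U] [MeasurableSpace U]
    [BorelSpace U] {τ : Measure T} {I : Set T} (hI : IsCompact I) (hτ : ∀ᵐ t ∂τ, t ∈ I)
    {x : T → X} (hx : ContinuousOn x I) {u : T → U} (hu : AEMeasurable u τ)
    (hu_bdd : ∃ C : ℝ, ∀ᵐ t ∂τ, ‖u t‖ ≤ C)
    {G : X → U → ℝ} (hG : ContDiff ℝ 1 fun q : X × U => G q.1 q.2)
    {l : Filter ι} [l.NeBot] {lam : ι → T → ℝ} (hlam : ∀ k, Integrable (lam k) τ)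
    (hlam0 : ∀ k, ∀ᵐ t ∂τ, 0 ≤ lam k t)
    (hphase : Tendsto (fun k => ∫ t, lam k t * phaseDefect G (x t) (u t) ∂τ) l (nhds 0))
    {η : Measure T} [IsFiniteMeasure η]
    (hη : ∀ φ : T → ℝ, Continuous φ →
      Tendsto (fun k => ∫ t, lam k t * φ t ∂τ) l (nhds (∫ t, φ t ∂η)))
    (hμ : ∀ φ : T → ℝ, Continuous φ → ∃ L : X →L[ℝ] ℝ,
      Tendsto (fun k => ∫ t, (lam k t * φ t) • fderiv ℝ (fun x' => G x' (u t)) (x t) ∂τ) l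
        (nhds L)) :
    ∃ s : T → X →L[ℝ] ℝ, AEStronglyMeasurable s η ∧ (∃ C : ℝ, ∀ᵐ t ∂η, ‖s t‖ ≤ C) ∧
      (∀ φ : T → ℝ, Continuous φ →
        Tendsto (fun k => ∫ t, (lam k t * φ t) • fderiv ℝ (fun x' => G x' (u t)) (x t) ∂τ) l
          (nhds (∫ t, φ t • s t ∂η))) ∧
      ∀ᵐ t ∂η,
        s t ∈ convexHull ℝ ((fun v => fderiv ℝ (fun x' => G x' v) (x t)) '' phaseSlice τ G x u t)
          ∧ t ∈ I ∧ (phaseSlice τ G x u t).Nonempty := by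
  obtain ⟨C, hC⟩ := hu_bdd
  let K : Set (T × U) := (τ.map fun t => (t, u t)).support ∩ I ×ˢ Metric.closedBall 0 C
  have hK : IsCompact K :=
    (hI.prod (isCompact_closedBall _ _)).inter_left Measure.isClosed_support
  have huK : ∀ᵐ t ∂τ, (t, u t) ∈ K := by
    filter_upwards [hτ, hC, ae_of_ae_map (aemeasurable_id.prodMk hu) Measure.support_mem_ae]
      with t htI htC hsupp using ⟨hsupp, htI, by simpa using htC⟩
  have hxu : ContinuousOn (fun y : T × U => (x y.1, y.2)) K :=
    (hx.comp continuousOn_fst fun _ hy => hy.2.1).prodMk continuousOn_snd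
  obtain ⟨s, hs_meas, hs_bdd, hs_lim, hs_mem⟩ := exists_density_of_tendsto_integral_graph hu hK huK
    hlam hlam0 hη ((continuous_phaseDefect hG).comp_continuousOn hxu)
    (fun _ => phaseDefect_nonneg _ _) hphase ((continuous_fderiv_left hG).comp_continuousOn hxu) hμ
  refine ⟨s, hs_meas, hs_bdd, hs_lim, hs_mem.mono fun t hst => ?_⟩
  have hslice : {v | (t, v) ∈ K ∧ phaseDefect G (x t) v = 0} ⊆ phaseSlice τ G x u t :=
    fun v hv => ⟨hv.1.1, phaseDefect_eq_zero_iff.1 hv.2⟩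
  obtain ⟨_, v, hv, -⟩ := convexHull_nonempty_iff.1 ⟨_, hst⟩
  exact ⟨convexHull_mono (image_mono hslice) hst, hv.1.2.1, v, hslice hv⟩

section LebesgueClosure

variable {t0 t1 : ℝ} {n m : ℕ} {u : ℝ → (Fin m → ℝ)}

theorem clmSet_eq_support (hu : Measurable u) :
    clmSet t0 t1 u = ((volume.restrict (Icc t0 t1)).map fun t => (t, u t)).support := by
  have hgraph : Measurable fun t => (t, u t) := measurable_id.prodMk hu
  have hmeas : ∀ O : Set (ℝ × (Fin m → ℝ)), IsOpen O →
      volume (Prod.fst '' (O ∩ ((fun t => (t, u t)) '' Icc t0 t1))) =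
        (volume.restrict (Icc t0 t1)).map (fun t => (t, u t)) O := fun O hO => by
    rw [Measure.map_apply hgraph hO.measurableSet,
      Measure.restrict_apply (hgraph hO.measurableSet), inter_comm O, ← image_inter_preimage,
      image_image, image_id', inter_comm]
  rw [Measure.support_eq_forall_isOpen]
  ext p
  exact ⟨fun hp O hpO hO => hmeas O hO ▸ hp O hO hpO, fun hp O hO hpO => hmeas O hO ▸ hp O hpO hO⟩

variable {G : (Fin n → ℝ) → (Fin m → ℝ) → ℝ} {x : ℝ → (Fin n → ℝ)}

theorem Sset_clmAt_eq_image_phaseSlice (hu : Measurable u) (t : ℝ) :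
    Sset G (x t) (clmAt t0 t1 u t) = (fun v => fderiv ℝ (fun x' => G x' v) (x t)) ''
      phaseSlice (volume.restrict (Icc t0 t1)) G x u t := by
  ext r
  simp only [Sset, clmAt, phaseSlice, clmSet_eq_support hu, mem_image, mem_ofPred_eq, and_assoc,
    eq_comm]

theorem mem_Dset_iff (hu : Measurable u) {t : ℝ} :
    t ∈ Dset t0 t1 G x u ↔
      t ∈ Icc t0 t1 ∧ (phaseSlice (volume.restrict (Icc t0 t1)) G x u t).Nonempty := by
  simp only [Dset, clmAt, phaseSlice, clmSet_eq_support hu, Set.Nonempty, mem_ofPred_eq]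

end LebesgueClosure

/-- representation of the singular part: under the stated hypotheses, the
weak-* limit `μ̂_B` of the vector measures `λ^k G_x(ŵ) dt` has a density `ŝ` with respect
to the weak-* limit `η̂` of `λ^k dt`, with `ŝ(t) ∈ conv S(x̂(t), clm(û)(t))` for `η̂`-a.e.
`t`; in particular `η̂`-a.e. `t` belongs to `D`.  (Weak-* convergence and the identity
`μ̂_B = ŝ·η̂` are expressed by testing against all continuous functions.) -/
theorem singular_part_representation {n m : ℕ} (t0 t1 : ℝ) (ht : t0 < t1)
    (xh : ℝ → (Fin n → ℝ)) (uh : ℝ → (Fin m → ℝ))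
    (hxh : ContinuousOn xh (Icc t0 t1))
    (huh_meas : Measurable uh) (huh_bdd : EssBdd t0 t1 uh)
    (G : (Fin n → ℝ) → (Fin m → ℝ) → ℝ)
    (hG : ContDiff ℝ 1 (fun q : (Fin n → ℝ) × (Fin m → ℝ) => G q.1 q.2))
    (E : ℕ → Set ℝ) (hE : ∀ k, MeasurableSet (E k) ∧ E k ⊆ Icc t0 t1)
    (hEmes : Tendsto (fun k => (volume (E k)).toReal) atTop (nhds 0))
    (lam : ℕ → ℝ → ℝ)
    (hlam_int : ∀ k, IntegrableOn (lam k) (Icc t0 t1))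
    (hlam_nonneg : ∀ k, ∀ᵐ t ∂(volume.restrict (Icc t0 t1)), 0 ≤ lam k t)
    (hlam_supp : ∀ k, ∀ᵐ t ∂(volume.restrict (Icc t0 t1)), t ∉ E k → lam k t = 0)
    (δ ε : ℕ → ℝ) (hδpos : ∀ k, 0 < δ k) (hεpos : ∀ k, 0 < ε k)
    (hδ0 : Tendsto δ atTop (nhds 0)) (hε0 : Tendsto ε atTop (nhds 0))
    (hGbound : ∀ k, ∀ᵐ t ∂(volume.restrict (E k)),
      -δ k ≤ G (xh t) (uh t) ∧ G (xh t) (uh t) ≤ 0 ∧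
      ‖fderiv ℝ (fun u' => G (xh t) u') (uh t)‖ ≤ ε k)
    (η : Measure ℝ) (hηfin : IsFiniteMeasure η) (hηne : η ≠ 0)
    (hηsupp : η ((Icc t0 t1)ᶜ) = 0)
    -- `λ^k dt` converges weakly-* to `η̂`
    (hηconv : ∀ φ : ℝ → ℝ, Continuous φ →
      Tendsto (fun k => ∫ t in Icc t0 t1, lam k t * φ t) atTop (nhds (∫ t, φ t ∂η)))
    -- `λ^k G_x(ŵ) dt` converges weakly-* (to the vector measure `μ̂_B`)
    (hμconv : ∀ φ : ℝ → ℝ, Continuous φ →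
      ∃ L : (Fin n → ℝ) →L[ℝ] ℝ,
        Tendsto (fun k => ∫ t in Icc t0 t1,
            (lam k t * φ t) • fderiv ℝ (fun x' => G x' (uh t)) (xh t)) atTop (nhds L)) :
    ∃ s : ℝ → (Fin n → ℝ) →L[ℝ] ℝ,
      AEStronglyMeasurable s η ∧
      (∃ C : ℝ, ∀ᵐ t ∂η, ‖s t‖ ≤ C) ∧
      -- `μ̂_B = ŝ·η̂`
      (∀ φ : ℝ → ℝ, Continuous φ →
        Tendsto (fun k => ∫ t in Icc t0 t1,
            (lam k t * φ t) • fderiv ℝ (fun x' => G x' (uh t)) (xh t)) atTop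
          (nhds (∫ t, φ t • s t ∂η))) ∧
      -- `ŝ(t) ∈ conv S(x̂(t), clm(û)(t))` for `η̂`-a.e. `t`, and `η̂`-a.e. `t` lies in `D`
      (∀ᵐ t ∂η, s t ∈ convexHull ℝ (Sset G (xh t) (clmAt t0 t1 uh t))
        ∧ t ∈ Dset t0 t1 G xh uh) := by
  have hdefect : ∀ k, ∀ᵐ t ∂volume.restrict (E k), ‖phaseDefect G (xh t) (uh t)‖ ≤ δ k + ε k :=
    fun k => (hGbound k).mono fun t h => norm_phaseDefect_le h.1 h.2.1 h.2.2
  have hmass : Tendsto (fun k => ∫ t in Icc t0 t1, lam k t) atTop (nhds (∫ _, 1 ∂η)) := by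
    simpa only [mul_one] using hηconv (fun _ => 1) continuous_const
  have hphase := tendsto_setIntegral_mul_zero hlam_int hlam_nonneg hmass (fun k => (hE k).1)
    hlam_supp hdefect (by simpa using hδ0.add hε0)
  simpa only [Sset_clmAt_eq_image_phaseSlice huh_meas, mem_Dset_iff huh_meas] using
    singular_part_representation_general isCompact_Icc (ae_restrict_mem measurableSet_Icc) hxh
      huh_meas.aemeasurable huh_bdd hG hlam_int hlam_nonneg hphase hηconv hμconv
end

section
/- Let g ∈ L^∞([t0,t1],R) with g(t) ≤ 0 a.e., let δ^k → 0+ be positive numbers, and let λ^k ∈ L^1([t0,t1],R) satisfy λ^k ≥ 0 a.e. and λ^k(t) = 0 for a.e. t with g(t) < −δ^k. If λ^k converges weakly in L^1 to λ̂ (i.e., ∫ λ^k u dt → ∫ λ̂ u dt for all u ∈ L^∞), then λ̂(t) ≥ 0 a.e. and λ̂(t)·g(t) = 0 for a.e. t ∈ [t0,t1]. -/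
open MeasureTheory Set Filter

/-!
Testing against indicator functions, weak convergence in `L¹` gives convergence of the integrals
over every measurable set, so the limit `λ̂` of the nonnegative `λ^k` is nonnegative. For fixed
`ε > 0` the functions `λ^k` vanish a.e. on `{g < -ε}` as soon as `δ^k < ε`, hence `λ̂` has integral
zero there and, being nonnegative, vanishes a.e. there. Letting `ε → 0` gives `λ̂ = 0` a.e. on
`{g < 0}`.
-/

section WeakLimits

variable {α ι : Type*} [MeasurableSpace α] {μ : Measure α} {l : Filter ι}
  {f : ι → α → ℝ} {F g : α → ℝ} {s : Set α}

lemma ae_restrict_setOf_neg {p : α → Prop}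
    (h : ∀ ε > 0, ∀ᵐ t ∂μ.restrict {t | g t < -ε}, p t) :
    ∀ᵐ t ∂μ.restrict {t | g t < 0}, p t := by
  have hcover : {t | g t < 0} ⊆ ⋃ n : ℕ, {t | g t < -(1 / ((n : ℝ) + 1))} := by
    intro t ht
    obtain ⟨n, hn⟩ := exists_nat_one_div_lt (show 0 < -g t from neg_pos.2 ht)
    exact mem_iUnion.2 ⟨n, lt_neg_of_lt_neg hn⟩
  exact ae_restrict_of_ae_restrict_of_subset hcover
    ((ae_restrict_iUnion_iff _ _).2 fun _ => h _ Nat.one_div_pos_of_nat)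

lemma ae_nonneg_of_tendsto_setIntegral [l.NeBot] (hF : Integrable F μ)
    (hf : ∀ᶠ k in l, 0 ≤ᵐ[μ] f k)
    (hlim : ∀ s, MeasurableSet s → μ s < ⊤ →
      Tendsto (fun k => ∫ t in s, f k t ∂μ) l (nhds (∫ t in s, F t ∂μ))) :
    0 ≤ᵐ[μ] F :=
  ae_nonneg_of_forall_setIntegral_nonneg hF fun s hs hμs =>
    ge_of_tendsto (hlim s hs hμs) <|
      hf.mono fun _ hk => integral_nonneg_of_ae (ae_restrict_of_ae hk)

lemma ae_eq_zero_of_tendsto_integral [l.NeBot] (hF : Integrable F μ) (hF_nonneg : 0 ≤ᵐ[μ] F)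
    (hf : ∀ᶠ k in l, f k =ᵐ[μ] 0)
    (hlim : Tendsto (fun k => ∫ t, f k t ∂μ) l (nhds (∫ t, F t ∂μ))) :
    F =ᵐ[μ] 0 := by
  have hintegral : ∫ t, F t ∂μ = 0 :=
    tendsto_nhds_unique_of_eventuallyEq hlim tendsto_const_nhds
      (hf.mono fun _ hk => integral_eq_zero_of_ae hk)
  exact (integral_eq_zero_iff_of_nonneg_ae hF_nonneg hF).1 hintegral

/-- Weak convergence in `L¹(μ)` of `f` to `F` along `l`. Elements of `L¹` are represented by
integrable functions and test functions in `L^∞` by measurable functions that are bounded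
everywhere, which represent all of `L^∞`. -/
structure TendstoWeakL1 (μ : Measure α) (f : ι → α → ℝ) (l : Filter ι) (F : α → ℝ) : Prop where
  integrable : ∀ k, Integrable (f k) μ
  integrable_limit : Integrable F μ
  tendsto_integral_mul : ∀ u : α → ℝ, Measurable u → (∃ C : ℝ, ∀ t, |u t| ≤ C) →
    Tendsto (fun k => ∫ t, f k t * u t ∂μ) l (nhds (∫ t, F t * u t ∂μ))

namespace TendstoWeakL1

lemma tendsto_setIntegral (h : TendstoWeakL1 μ f l F) (hs : NullMeasurableSet s μ) :
    Tendsto (fun k => ∫ t in s, f k t ∂μ) l (nhds (∫ t in s, F t ∂μ)) := by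
  obtain ⟨s', -, hs', hs_ae⟩ := hs.exists_measurable_superset_ae_eq
  have integral_mul_indicator_one (φ : α → ℝ) :
      ∫ t, φ t * s'.indicator 1 t ∂μ = ∫ t in s, φ t ∂μ := by
    simp_rw [← indicator_mul_right, Pi.one_apply, mul_one]
    rw [integral_indicator hs', setIntegral_congr_set hs_ae]
  have hbdd (t : α) : |s'.indicator (1 : α → ℝ) t| ≤ 1 := by
    simpa using norm_indicator_le_norm_self (s := s') (1 : α → ℝ) t
  simpa only [integral_mul_indicator_one] using
    h.tendsto_integral_mul _ (measurable_one.indicator hs') ⟨1, hbdd⟩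

lemma ae_nonneg [l.NeBot] (h : TendstoWeakL1 μ f l F) (hf : ∀ᶠ k in l, 0 ≤ᵐ[μ] f k) :
    0 ≤ᵐ[μ] F :=
  ae_nonneg_of_tendsto_setIntegral h.integrable_limit hf fun _ hs _ =>
    h.tendsto_setIntegral hs.nullMeasurableSet

lemma ae_restrict_eq_zero [l.NeBot] (h : TendstoWeakL1 μ f l F) (hs : NullMeasurableSet s μ)
    (hF_nonneg : 0 ≤ᵐ[μ.restrict s] F) (hf : ∀ᶠ k in l, f k =ᵐ[μ.restrict s] 0) :
    F =ᵐ[μ.restrict s] 0 :=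
  ae_eq_zero_of_tendsto_integral h.integrable_limit.restrict hF_nonneg hf
    (h.tendsto_setIntegral hs)

lemma ae_restrict_setOf_neg_eq_zero [l.NeBot] (h : TendstoWeakL1 μ f l F)
    (hF_nonneg : 0 ≤ᵐ[μ] F) (hg : AEMeasurable g μ) {δ : ι → ℝ} (hδ : Tendsto δ l (nhds 0))
    (hf_supp : ∀ᶠ k in l, ∀ᵐ t ∂μ, g t < -δ k → f k t = 0) :
    F =ᵐ[μ.restrict {t | g t < 0}] 0 := by
  refine ae_restrict_setOf_neg fun ε hε => ?_
  have hs : NullMeasurableSet {t | g t < -ε} μ := nullMeasurableSet_lt hg aemeasurable_const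
  refine h.ae_restrict_eq_zero hs (ae_restrict_of_ae hF_nonneg) ?_
  filter_upwards [hf_supp, hδ.eventually_lt_const hε] with k hk hδε
  refine (ae_restrict_iff'₀ hs).2 (hk.mono fun t ht hgt => ht ?_)
  exact lt_trans hgt (neg_lt_neg hδε)

end TendstoWeakL1

theorem complementary_slackness_limit_general [l.NeBot] (h : TendstoWeakL1 μ f l F)
    (hg : AEMeasurable g μ) (hg_nonpos : g ≤ᵐ[μ] 0)
    {δ : ι → ℝ} (hδ : Tendsto δ l (nhds 0))
    (hf_nonneg : ∀ᶠ k in l, 0 ≤ᵐ[μ] f k)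
    (hf_supp : ∀ᶠ k in l, ∀ᵐ t ∂μ, g t < -δ k → f k t = 0) :
    0 ≤ᵐ[μ] F ∧ ∀ᵐ t ∂μ, F t * g t = 0 := by
  have hF_nonneg : 0 ≤ᵐ[μ] F := h.ae_nonneg hf_nonneg
  have hF_zero : ∀ᵐ t ∂μ, g t < 0 → F t = 0 :=
    (ae_restrict_iff'₀ (nullMeasurableSet_lt hg aemeasurable_const)).1
      (h.ae_restrict_setOf_neg_eq_zero hF_nonneg hg hδ hf_supp)
  refine ⟨hF_nonneg, ?_⟩
  filter_upwards [hg_nonpos, hF_zero] with t hgt hFt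
  rcases hgt.eq_or_lt with hgt_zero | hgt_neg
  · exact mul_eq_zero_of_right _ hgt_zero
  · exact mul_eq_zero_of_left (hFt hgt_neg) _

end WeakLimits

/-- let `g ∈ L^∞([t0,t1],ℝ)` with `g ≤ 0` a.e., `δ^k → 0+`, and let
`λ^k ∈ L¹` with `λ^k ≥ 0` a.e. and `λ^k(t) = 0` for a.e. `t` with `g(t) < -δ^k`.
If `λ^k → λ̂` weakly in `L¹` (tested against every `u ∈ L^∞`), then `λ̂ ≥ 0` a.e.
and `λ̂·g = 0` a.e. on `[t0,t1]`. -/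
theorem complementary_slackness_limit (t0 t1 : ℝ) (g : ℝ → ℝ)
    (hg_meas : Measurable g)
    (hg_bdd : ∃ C : ℝ, ∀ᵐ t ∂(volume.restrict (Icc t0 t1)), |g t| ≤ C)
    (hg_nonpos : ∀ᵐ t ∂(volume.restrict (Icc t0 t1)), g t ≤ 0)
    (δ : ℕ → ℝ) (hδpos : ∀ k, 0 < δ k) (hδ0 : Tendsto δ atTop (nhds 0))
    (lam : ℕ → ℝ → ℝ)
    (hlam_int : ∀ k, IntegrableOn (lam k) (Icc t0 t1))
    (hlam_nonneg : ∀ k, ∀ᵐ t ∂(volume.restrict (Icc t0 t1)), 0 ≤ lam k t)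
    (hlam_supp : ∀ k, ∀ᵐ t ∂(volume.restrict (Icc t0 t1)), g t < -δ k → lam k t = 0)
    (lamh : ℝ → ℝ) (hlamh_int : IntegrableOn lamh (Icc t0 t1))
    (hconv : ∀ u : ℝ → ℝ, Measurable u → (∃ C : ℝ, ∀ t, |u t| ≤ C) →
      Tendsto (fun k => ∫ t in Icc t0 t1, lam k t * u t) atTop
        (nhds (∫ t in Icc t0 t1, lamh t * u t))) :
    (∀ᵐ t ∂(volume.restrict (Icc t0 t1)), 0 ≤ lamh t) ∧
    (∀ᵐ t ∂(volume.restrict (Icc t0 t1)), lamh t * g t = 0) :=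
  complementary_slackness_limit_general ⟨hlam_int, hlamh_int, hconv⟩ hg_meas.aemeasurable
    hg_nonpos hδ0 (.of_forall hlam_nonneg) (.of_forall hlam_supp)
end

section
/- Let 0 < m < T and b = T − m. Define x̂ ∈ AC([−T,T],R) by x̂(t) = 0 for |t| ≤ b and x̂(t) = (1/2)(|t| − b)² for b ≤ |t| ≤ T, and û(t) = x̂'(t) (so û = 0 on [−b,b], û(t) = t − b on [b,T], û(t) = t + b on [−T,−b]). Then (x̂,û) is a global minimizer of the problem: minimize J(x,u) = ∫_{−T}^{T} x(t)dt − (m/2)(x(−T) + x(T)) over x ∈ AC([−T,T],R), u ∈ L^∞([−T,T],R) subject to ẋ(t) = u(t) a.e. and (1/2)u(t)² − x(t) ≤ 0 a.e.; that is, every admissible pair (x,u) satisfies J(x,u) ≥ J(x̂,û) = −m³/6. -/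
open MeasureTheory Set Filter

/-- Admissible pairs of Example 2 on `[-T,T]`: `x` absolutely continuous with `ẋ = u`
a.e. (encoded in integral form), `u ∈ L^∞`, and the nonregular mixed constraint
`(1/2)u² - x ≤ 0` a.e. -/
def AdmissibleEx2 (T : ℝ) (x u : ℝ → ℝ) : Prop :=
  Measurable u ∧ (∃ C : ℝ, ∀ᵐ t ∂(volume.restrict (Icc (-T) T)), |u t| ≤ C) ∧
  IntegrableOn u (Icc (-T) T) ∧
  (∀ t ∈ Icc (-T) T, x t = x (-T) + ∫ s in (-T)..t, u s) ∧
  (∀ᵐ t ∂(volume.restrict (Icc (-T) T)), (1/2) * (u t)^2 - x t ≤ 0)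

/-- The cost of Example 2 (Mayer problem in reduced form):
`J(x,u) = ∫_{-T}^{T} x dt - (m/2)(x(-T) + x(T))`. -/
noncomputable def costEx2 (T m : ℝ) (x : ℝ → ℝ) : ℝ :=
  (∫ t in Icc (-T) T, x t) - (m / 2) * (x (-T) + x T)

/-!
The optimal control `w = û` calibrates the problem. An admissible `x` satisfies `u² / 2 ≤ x`, hence
`x ≥ 0`, so `w' ≤ 1` and the Young inequality `w u ≤ w² / 2 + u² / 2` give
`(w x)' = w' x + w u ≤ 2 x + w² / 2`. Integrating, with `w(±T) = ±m` and `∫ w² = 2 m³ / 3`,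
turns this into `m (x(-T) + x(T)) ≤ 2 ∫ x + m³ / 3`, that is `J(x, u) ≥ -m³ / 6`. Equality holds for
`u = w` and `x = w² / 2`, since `w' = 1` wherever `w ≠ 0`.
-/

open intervalIntegral

section Primitive

variable {a b : ℝ}

theorem absolutelyContinuousOnInterval_congr {X : Type*} [PseudoMetricSpace X] {f g : ℝ → X}
    (hf : AbsolutelyContinuousOnInterval f a b) (h : EqOn f g (uIcc a b)) :
    AbsolutelyContinuousOnInterval g a b := by
  refine Tendsto.congr' ?_ hf
  filter_upwards [mem_inf_of_right (mem_principal_self _)] with E hE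
  exact Finset.sum_congr rfl fun i hi => by rw [h (hE.1 i hi).1, h (hE.1 i hi).2]

variable {x u : ℝ → ℝ}

theorem absolutelyContinuousOnInterval_of_eq_add_integral (hu : IntervalIntegrable u volume a b)
    (hx : ∀ t ∈ uIcc a b, x t = x a + ∫ s in a..t, u s) :
    AbsolutelyContinuousOnInterval x a b := by
  have hconst : AbsolutelyContinuousOnInterval (fun _ => x a) a b :=
    contDiffOn_const.absolutelyContinuousOnInterval
  exact absolutelyContinuousOnInterval_congr
    (hconst.fun_add (hu.absolutelyContinuousOnInterval_intervalIntegral left_mem_uIcc))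
    fun t ht => (hx t ht).symm

theorem ae_deriv_eq_of_eq_add_integral (hab : a ≤ b) (hu : IntervalIntegrable u volume a b)
    (hx : ∀ t ∈ Icc a b, x t = x a + ∫ s in a..t, u s) :
    ∀ᵐ t ∂volume.restrict (Icc a b), deriv x t = u t := by
  rw [← Measure.restrict_congr_set Ioo_ae_eq_Icc]
  filter_upwards [ae_restrict_of_ae hu.ae_hasDerivAt_integral,
    ae_restrict_mem measurableSet_Ioo] with t hderiv ht
  have ht' : t ∈ uIcc a b := uIcc_of_le hab ▸ Ioo_subset_Icc_self ht
  have heq : x =ᶠ[nhds t] fun t => x a + ∫ s in a..t, u s :=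
    eventually_of_mem (Icc_mem_nhds ht.1 ht.2) hx
  exact (((hderiv ht' a left_mem_uIcc).const_add (x a)).congr_of_eventuallyEq heq).deriv

end Primitive

theorem mul_sub_mul_le_of_half_sq_deriv_le {a b c : ℝ} {w x : ℝ → ℝ} (hab : a ≤ b)
    (hw : AbsolutelyContinuousOnInterval w a b) (hx : AbsolutelyContinuousOnInterval x a b)
    (hwc : ∀ᵐ t ∂volume.restrict (Icc a b), deriv w t ≤ c)
    (hxx : ∀ᵐ t ∂volume.restrict (Icc a b), (1 / 2) * deriv x t ^ 2 ≤ x t) :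
    w b * x b - w a * x a ≤ (c + 1) * (∫ t in a..b, x t) + (1 / 2) * ∫ t in a..b, w t ^ 2 := by
  have hx_int : IntervalIntegrable x volume a b := hx.continuousOn.intervalIntegrable
  have hw_int : IntervalIntegrable (fun t => w t ^ 2) volume a b :=
    (hw.continuousOn.pow 2).intervalIntegrable
  have hwx_int : IntervalIntegrable (fun t => deriv w t * x t + w t * deriv x t) volume a b :=
    (hw.intervalIntegrable_deriv.mul_continuousOn hx.continuousOn).add
      (hx.intervalIntegrable_deriv.continuousOn_mul hw.continuousOn)
  have hle : ∀ᵐ t ∂volume.restrict (Icc a b),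
      deriv w t * x t + w t * deriv x t ≤ (c + 1) * x t + (1 / 2) * w t ^ 2 := by
    filter_upwards [hwc, hxx] with t hwt hxt
    have hx_nonneg : 0 ≤ x t := le_trans (by positivity) hxt
    have young : w t * deriv x t ≤ (1 / 2) * w t ^ 2 + (1 / 2) * deriv x t ^ 2 := by
      linarith [two_mul_le_add_sq (w t) (deriv x t)]
    linarith [mul_le_mul_of_nonneg_right hwt hx_nonneg]
  calc w b * x b - w a * x a
      = ∫ t in a..b, deriv w t * x t + w t * deriv x t := (hw.integral_deriv_mul_eq_sub hx).symm
    _ ≤ ∫ t in a..b, (c + 1) * x t + (1 / 2) * w t ^ 2 :=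
        integral_mono_ae_restrict hab hwx_int
          ((hx_int.const_mul _).add (hw_int.const_mul _)) hle
    _ = (c + 1) * (∫ t in a..b, x t) + (1 / 2) * ∫ t in a..b, w t ^ 2 := by
        rw [integral_add (hx_int.const_mul _) (hw_int.const_mul _),
          intervalIntegral.integral_const_mul, intervalIntegral.integral_const_mul]

theorem hasDerivAt_max_zero_pow (n : ℕ) (s : ℝ) :
    HasDerivAt (fun s : ℝ => max s 0 ^ (n + 2)) ((n + 2) * max s 0 ^ (n + 1)) s := by
  refine hasDerivAt_of_hasDerivAt_of_ne' (x := 0)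
    (g := fun s : ℝ => (n + 2) * max s 0 ^ (n + 1)) (fun y hy => ?_) (by fun_prop) (by fun_prop) s
  rcases lt_or_gt_of_ne hy with h | h
  · have heq : (fun s : ℝ => max s 0 ^ (n + 2)) =ᶠ[nhds y] fun _ => 0 := by
      filter_upwards [Iio_mem_nhds h] with z hz
      simp [max_eq_right (mem_Iio.1 hz).le]
    simpa [max_eq_right h.le] using (hasDerivAt_const y (0 : ℝ)).congr_of_eventuallyEq heq
  · have heq : (fun s : ℝ => max s 0 ^ (n + 2)) =ᶠ[nhds y] fun z => z ^ (n + 2) := by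
      filter_upwards [Ioi_mem_nhds h] with z hz
      rw [max_eq_left (mem_Ioi.1 hz).le]
    simpa [max_eq_left h.le] using (hasDerivAt_pow (n + 2) y).congr_of_eventuallyEq heq

/-- Soft thresholding at level `b`: the signed distance of `t` to the interval `[-b, b]`
(for `0 ≤ b`). For `b = T - m` this is the optimal control `û`. -/
noncomputable def softThreshold (b t : ℝ) : ℝ :=
  max (t - b) 0 - max (-t - b) 0

namespace softThreshold

theorem continuous (b : ℝ) : Continuous (softThreshold b) := by
  unfold softThreshold
  fun_prop

theorem neg (b t : ℝ) : softThreshold b (-t) = -softThreshold b t := by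
  simp only [softThreshold, neg_neg, neg_sub]

variable {b : ℝ} (hb : 0 ≤ b)
include hb

theorem of_le {t : ℝ} (ht : b ≤ t) : softThreshold b t = t - b := by
  rw [softThreshold, max_eq_left (by linarith), max_eq_right (by linarith), sub_zero]

theorem eq_ite (t : ℝ) :
    softThreshold b t = if 0 ≤ t then max (t - b) 0 else min (t + b) 0 := by
  grind [softThreshold]

theorem abs_eq (t : ℝ) : |softThreshold b t| = max (|t| - b) 0 := by
  grind [softThreshold]

theorem lipschitzWith_one : LipschitzWith 1 (softThreshold b) :=
  LipschitzWith.of_le_add fun s t => by grind [softThreshold, Real.dist_eq]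

theorem deriv_le_one (t : ℝ) : deriv (softThreshold b) t ≤ 1 :=
  (le_abs_self _).trans (by simpa using norm_deriv_le_of_lipschitz (lipschitzWith_one hb))

theorem pow_succ_eq (n : ℕ) (t : ℝ) :
    softThreshold b t ^ (n + 1) =
      max (t - b) 0 ^ (n + 1) + (-1) ^ (n + 1) * max (-t - b) 0 ^ (n + 1) := by
  rcases le_total 0 t with h | h
  · simp [softThreshold, max_eq_right (by linarith : -t - b ≤ 0)]
  · simp [softThreshold, max_eq_right (by linarith : t - b ≤ 0), ← mul_pow]

theorem hasDerivAt_pow (n : ℕ) (t : ℝ) :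
    HasDerivAt (fun t => softThreshold b t ^ (n + 2))
      ((n + 2) * softThreshold b t ^ (n + 1)) t := by
  simp only [pow_succ_eq hb]
  have hright := (hasDerivAt_max_zero_pow n (t - b)).comp t ((hasDerivAt_id t).sub_const b)
  have hleft := (hasDerivAt_max_zero_pow n (-t - b)).comp t ((hasDerivAt_neg t).sub_const b)
  convert! hright.add (hleft.const_mul ((-1) ^ (n + 2))) using 1
  ring

theorem integral_sq {T : ℝ} (hbT : b ≤ T) :
    ∫ t in (-T)..T, softThreshold b t ^ 2 = 2 / 3 * (T - b) ^ 3 := by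
  have hderiv (t : ℝ) :
      HasDerivAt (fun t => 1 / 3 * softThreshold b t ^ 3) (softThreshold b t ^ 2) t := by
    convert! (hasDerivAt_pow hb 1 t).const_mul (1 / 3) using 1
    push_cast
    ring
  rw [integral_eq_sub_of_hasDerivAt (fun t _ => hderiv t)
    (((continuous b).pow 2).intervalIntegrable _ _), neg, of_le hb hbT]
  ring

end softThreshold

theorem costEx2_eq_intervalIntegral {T : ℝ} (hT : 0 ≤ T) (m : ℝ) (x : ℝ → ℝ) :
    costEx2 T m x = (∫ t in (-T)..T, x t) - m / 2 * (x (-T) + x T) := by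
  rw [costEx2, integral_Icc_eq_integral_Ioc, ← integral_of_le (by linarith)]

theorem admissibleEx2_of_hasDerivAt (T : ℝ) {x u : ℝ → ℝ} (hu : Continuous u)
    (hxu : ∀ t, HasDerivAt x (u t) t) (hux : ∀ t, (1 / 2) * u t ^ 2 ≤ x t) :
    AdmissibleEx2 T x u := by
  refine ⟨hu.measurable, ?_, hu.integrableOn_Icc, fun t _ => ?_,
    ae_of_all _ fun t => sub_nonpos.2 (hux t)⟩
  · obtain ⟨C, hC⟩ := isCompact_Icc.exists_bound_of_continuousOn (s := Icc (-T) T) hu.continuousOn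
    exact ⟨C, ae_restrict_of_forall_mem measurableSet_Icc hC⟩
  · rw [integral_eq_sub_of_hasDerivAt (fun s _ => hxu s) (hu.intervalIntegrable _ _)]
    ring

theorem AdmissibleEx2.neg_cube_div_six_le_cost {T m : ℝ} (hm : 0 ≤ m) (hmT : m ≤ T)
    {x u : ℝ → ℝ} (h : AdmissibleEx2 T x u) : -(m ^ 3) / 6 ≤ costEx2 T m x := by
  have hT : 0 ≤ T := hm.trans hmT
  have hb : 0 ≤ T - m := sub_nonneg.2 hmT
  have hbT : T - m ≤ T := sub_le_self T hm
  have hTT : -T ≤ T := neg_le_self hT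
  obtain ⟨-, -, hu_int, hx, hux⟩ := h
  rw [← uIcc_of_le hTT] at hu_int
  have hu : IntervalIntegrable u volume (-T) T := hu_int.intervalIntegrable
  have hx_ac : AbsolutelyContinuousOnInterval x (-T) T :=
    absolutelyContinuousOnInterval_of_eq_add_integral hu (by rwa [uIcc_of_le hTT])
  have hconstraint : ∀ᵐ t ∂volume.restrict (Icc (-T) T), (1 / 2) * deriv x t ^ 2 ≤ x t := by
    filter_upwards [ae_deriv_eq_of_eq_add_integral hTT hu hx, hux] with t hderiv huxt
    exact hderiv ▸ sub_nonpos.1 huxt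
  have hcal := mul_sub_mul_le_of_half_sq_deriv_le hTT
    (softThreshold.lipschitzWith_one hb).lipschitzOnWith.absolutelyContinuousOnInterval hx_ac
    (ae_of_all _ (softThreshold.deriv_le_one hb)) hconstraint
  rw [softThreshold.integral_sq hb hbT, softThreshold.neg, softThreshold.of_le hb hbT] at hcal
  rw [costEx2_eq_intervalIntegral hT]
  linarith

theorem admissibleEx2_softThreshold (T : ℝ) {b : ℝ} (hb : 0 ≤ b) :
    AdmissibleEx2 T (fun t => (1 / 2) * softThreshold b t ^ 2) (softThreshold b) := by
  refine admissibleEx2_of_hasDerivAt T (softThreshold.continuous b) (fun t => ?_) fun _ => le_rfl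
  convert! (softThreshold.hasDerivAt_pow hb 0 t).const_mul (1 / 2) using 1
  push_cast
  ring

theorem costEx2_softThreshold {T m : ℝ} (hm : 0 ≤ m) (hmT : m ≤ T) :
    costEx2 T m (fun t => (1 / 2) * softThreshold (T - m) t ^ 2) = -(m ^ 3) / 6 := by
  have hb : 0 ≤ T - m := sub_nonneg.2 hmT
  have hbT : T - m ≤ T := sub_le_self T hm
  rw [costEx2_eq_intervalIntegral (hm.trans hmT), intervalIntegral.integral_const_mul,
    softThreshold.integral_sq hb hbT, softThreshold.neg, softThreshold.of_le hb hbT]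
  ring

/-- Example 2: for `0 < m < T`, `b = T - m`, the process
`x̂(t) = (1/2)(max(|t| - b, 0))²`, `û = x̂'` is a global minimizer of
`min ∫_{-T}^T x dt - (m/2)(x(-T)+x(T))` subject to `ẋ = u`, `(1/2)u² - x ≤ 0`;
every admissible pair has cost `≥ J(x̂,û) = -m³/6`. -/
theorem example2_global_min (T m : ℝ) (hm0 : 0 < m) (hmT : m < T) :
    AdmissibleEx2 T
      (fun t => (1/2) * (max (|t| - (T - m)) 0)^2)
      (fun t => if 0 ≤ t then max (t - (T - m)) 0 else min (t + (T - m)) 0) ∧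
    costEx2 T m (fun t => (1/2) * (max (|t| - (T - m)) 0)^2) = -(m^3) / 6 ∧
    (∀ x u : ℝ → ℝ, AdmissibleEx2 T x u → -(m^3) / 6 ≤ costEx2 T m x) := by
  have hb : 0 ≤ T - m := sub_nonneg.2 hmT.le
  simp only [← softThreshold.abs_eq hb, sq_abs, ← softThreshold.eq_ite hb]
  exact ⟨admissibleEx2_softThreshold T hb, costEx2_softThreshold hm0.le hmT.le,
    fun _ _ h => h.neg_cube_div_six_le_cost hm0.le hmT.le⟩
end
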